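/- Weak comparison of H with T₄ − T₂ (Lemma 3.3(ii), estimate (pi22)): For every h ∈ L∞(I_δ) and every φ ∈ C₂ supported in I_{√ε}, one has |∫_{I_{√ε}} (H + T_{4,(g,f)} − T_{2,f})h(α)·φ(α) dα| + |∫_{I_{√ε}} (H + T_{4,(f,g)} − T_{2,g})h(α)·φ(α) dα| ≲ ε·log(1/ε)·‖h‖_{L∞(I_{2√ε})}. -/

import Mathlib

noncomputable section
open Set MeasureTheory Filter Real

/-- The principal value at `α` of the integral `∫_ℝ F(β) dβ`, understood as the limit of the
integrals over `{β : r < |α − β|}` as `r → 0⁺`. -/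
def pvI (F : ℝ → ℝ) (α : ℝ) : ℝ :=
  limUnder (nhdsWithin (0:ℝ) (Ioi 0)) (fun r => ∫ β in {β : ℝ | r < |α - β|}, F β)

/-- `ψ` is a smooth even cutoff, with values in `[0,1]`, supported in `[−1,1]`,
equal to `1` on `[−1/2,1/2]`. -/
def IsCutoff (ψ : ℝ → ℝ) : Prop :=
  ContDiff ℝ (⊤ : ℕ∞) ψ ∧ (∀ x : ℝ, ψ (-x) = ψ x) ∧ (∀ x : ℝ, ψ x ∈ Icc (0:ℝ) 1) ∧
    (∀ x : ℝ, 1 < |x| → ψ x = 0) ∧ (∀ x : ℝ, |x| ≤ 1/2 → ψ x = 1)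

/-- The rescaled cutoff `ψ_r(x) = ψ(x/r)`. -/
def scut (ψ : ℝ → ℝ) (r x : ℝ) : ℝ := ψ (x / r)

/-- `X̃(α) = 2ε + f(α) + g(α)`. -/
def Xt (ε : ℝ) (f g : ℝ → ℝ) (α : ℝ) : ℝ := 2 * ε + f α + g α

/-- The operator `T_{1,f}`. -/
def T1 (ψ : ℝ → ℝ) (ε : ℝ) (f : ℝ → ℝ) (h : ℝ → ℝ) (α : ℝ) : ℝ :=
  (2 * π)⁻¹ * pvI (fun β =>
    (f α - f β) / ((α - β) ^ 2 + (f α - f β) ^ 2) * h β * scut ψ (Real.sqrt ε) (α - β)) α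

/-- The operator `T_{2,f}`. -/
def T2 (ψ : ℝ → ℝ) (ε : ℝ) (f : ℝ → ℝ) (h : ℝ → ℝ) (α : ℝ) : ℝ :=
  (2 * π)⁻¹ * pvI (fun β =>
    (α - β) / ((α - β) ^ 2 + (f α - f β) ^ 2) * h β * scut ψ (Real.sqrt ε) (α - β)) α

/-- The operator `T_{3,(f,g)}`. -/
def T3 (ψ : ℝ → ℝ) (ε : ℝ) (f g : ℝ → ℝ) (h : ℝ → ℝ) (α : ℝ) : ℝ :=
  (2 * π)⁻¹ * ∫ β : ℝ,
    (2 * ε + f α + g β) / ((α - β) ^ 2 + (2 * ε + f α + g β) ^ 2) * h β *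
      scut ψ (Real.sqrt ε) (α - β)

/-- The operator `T_{4,(f,g)}`. -/
def T4 (ψ : ℝ → ℝ) (ε : ℝ) (f g : ℝ → ℝ) (h : ℝ → ℝ) (α : ℝ) : ℝ :=
  (2 * π)⁻¹ * ∫ β : ℝ,
    (α - β) / ((α - β) ^ 2 + (2 * ε + f α + g β) ^ 2) * h β * scut ψ (Real.sqrt ε) (α - β)

/-- The kernel of the operator `H`. -/
def Hker (ψ : ℝ → ℝ) (ε : ℝ) (f g : ℝ → ℝ) (α β : ℝ) : ℝ :=
  (α - β)⁻¹ * ((Xt ε f g α) ^ 2 / ((α - β) ^ 2 + (Xt ε f g α) ^ 2)) *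
    scut ψ (Real.sqrt ε / 2 ^ 6) α * scut ψ (Real.sqrt ε / 2 ^ 6) (α - β)

/-- The kernel of the operator `M`. -/
def Mker (ψ : ℝ → ℝ) (ε : ℝ) (f g : ℝ → ℝ) (α β : ℝ) : ℝ :=
  (Xt ε f g α) / ((α - β) ^ 2 + (Xt ε f g α) ^ 2) *
    scut ψ (Real.sqrt ε / 2 ^ 6) α * scut ψ (Real.sqrt ε / 2 ^ 6) (α - β)

/-- The operator `H` (a principal value integral in the second variable of the kernel). -/
def Hop (ψ : ℝ → ℝ) (ε : ℝ) (f g : ℝ → ℝ) (h : ℝ → ℝ) (α : ℝ) : ℝ :=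
  (2 * π)⁻¹ * pvI (fun β => Hker ψ ε f g α β * h β) α

/-- The adjoint operator `H*` (integration of the kernel of `H` in its first variable). -/
def Hstar (ψ : ℝ → ℝ) (ε : ℝ) (f g : ℝ → ℝ) (φ : ℝ → ℝ) (β : ℝ) : ℝ :=
  (2 * π)⁻¹ * pvI (fun α => Hker ψ ε f g α β * φ α) β

/-- The operator `M`. -/
def Mop (ψ : ℝ → ℝ) (ε : ℝ) (f g : ℝ → ℝ) (h : ℝ → ℝ) (α : ℝ) : ℝ :=
  (2 * π)⁻¹ * ∫ β : ℝ, Mker ψ ε f g α β * h β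

/-- The adjoint operator `M*` (integration of the kernel of `M` in its first variable). -/
def Mstar (ψ : ℝ → ℝ) (ε : ℝ) (f g : ℝ → ℝ) (φ : ℝ → ℝ) (β : ℝ) : ℝ :=
  (2 * π)⁻¹ * ∫ α : ℝ, Mker ψ ε f g α β * φ α

/-- The class `C₂` of test functions: `C¹` functions compactly supported in `I_δ = (−δ,δ)` with
`|φ⁽ᵏ⁾(α)| ≤ ε/(ε^{2+k} + |α|^{2+k})` on `I_δ` for `k ∈ {0,1}`. -/
def InC2 (δ ε : ℝ) (φ : ℝ → ℝ) : Prop :=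
  ContDiff ℝ 1 φ ∧ HasCompactSupport φ ∧ tsupport φ ⊆ Ioo (-δ) δ ∧
    ∀ α ∈ Ioo (-δ) δ,
      |φ α| ≤ ε / (ε ^ 2 + |α| ^ 2) ∧ |deriv φ α| ≤ ε / (ε ^ 3 + |α| ^ 3)

/-- The standing hypotheses on `f, g : (−δ,δ) → ℝ`: they are `C⁵`, with
`‖f‖_{C³} + ‖g‖_{C³} ≤ A`, `f(0) = f'(0) = g(0) = g'(0) = 0`, and
`f(α) + g(β) ≥ −ε` for `α, β ∈ (−4√ε, 4√ε)`. -/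
def GoodFG (δ A ε : ℝ) (f g : ℝ → ℝ) : Prop :=
  ContDiffOn ℝ 5 f (Ioo (-δ) δ) ∧ ContDiffOn ℝ 5 g (Ioo (-δ) δ) ∧
    f 0 = 0 ∧ g 0 = 0 ∧
    derivWithin f (Ioo (-δ) δ) 0 = 0 ∧ derivWithin g (Ioo (-δ) δ) 0 = 0 ∧
    (∀ x ∈ Ioo (-δ) δ, ∀ i : ℕ, i ≤ 3 →
      |iteratedDerivWithin i f (Ioo (-δ) δ) x| + |iteratedDerivWithin i g (Ioo (-δ) δ) x| ≤ A) ∧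
    (∀ α ∈ Ioo (-(4 * Real.sqrt ε)) (4 * Real.sqrt ε),
      ∀ β ∈ Ioo (-(4 * Real.sqrt ε)) (4 * Real.sqrt ε), -ε ≤ f α + g β)

/-!
Let `L` be the logarithmic potential of the truncated density `k = h · 1_{I_{2√ε}}`. Almost
everywhere the principal value of `k * (1 / ·)`, the singular part of `T_{2,f} h`, is `L'`, while
`H` and `T_{4,(g,f)}` see the conjugate Poisson integral `Q` of `k` at the height `2ε + f + g`.
Freezing `f'` and the height at `α` gives, with `χ = ψ_{√ε/2⁶}`,

  `2π (H + T_{4,(g,f)} - T_{2,f}) h = (χ - 1) (L' - Q) + f'² / (1 + f'²) · L' + R`,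

where the kernel of `R` is `O(√ε)` plus `|α| + |α - β|` times a Poisson kernel at height `ε`;
tested against `|φ| ≤ ε / (ε² + α²)` it costs `ε log (1/ε)`. Since `φ = O(ε / α²)` and `f' = O(α)`,
the second term has a coefficient of size `O(ε)`. In the first one `(χ - 1) φ` lives at distance
`∼ √ε` from the origin, where it is `O(1)` with derivative `O(ε^{-1/2})`, and `L' - Q` is, up to a
small term, the derivative of the difference between `L` and its extension to the height `O(ε)`.
This difference is `O(ε)`, so one integrates by parts. That is legitimate because `L` is absolutely
continuous with derivative in `L²`: its Dirichlet energy is bounded by Cauchy's theorem for the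
square of the Cauchy transform of `k` on rectangles just above the support of `k`.
-/

open scoped Topology

open AbsolutelyContinuousOnInterval (disjWithin)

/-! ### Limits of functions with bounded Dirichlet energy -/

/-- The discrete form of `∫_a^b |u'|² ≤ C`: on disjoint subintervals of `[a, b]` the increments of
`u` obey the inequality that Cauchy–Schwarz would give. Unlike the integral, it survives pointwise
limits without any differentiability of the limit. -/
def EnergyBoundOn (u : ℝ → ℝ) (a b C : ℝ) : Prop :=
  ∀ E ∈ disjWithin a b, ∑ i ∈ Finset.range E.1, dist (u (E.2 i).1) (u (E.2 i).2) ≤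
    √C * √(∑ i ∈ Finset.range E.1, dist (E.2 i).1 (E.2 i).2)

lemma sq_setIntegral_le_mul_setIntegral_sq {α : Type*} [MeasurableSpace α] {μ : Measure α}
    {s : Set α} {q : α → ℝ} (hs : μ s ≠ ⊤) (hq : IntegrableOn q s μ)
    (hq2 : IntegrableOn (fun x => q x ^ 2) s μ) :
    (∫ x in s, q x ∂μ) ^ 2 ≤ μ.real s * ∫ x in s, q x ^ 2 ∂μ := by
  rcases eq_or_ne (μ s) 0 with h0 | h0
  · simp [Measure.restrict_eq_zero.2 h0]
  have hpos : 0 < μ.real s := ENNReal.toReal_pos h0 hs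
  have jensen := (even_two.convexOn_pow (𝕜 := ℝ)).map_set_average_le (continuousOn_pow 2)
    isClosed_univ h0 hs (.of_forall fun _ => mem_univ _) hq hq2
  simp only [setAverage_eq, smul_eq_mul] at jensen
  calc (∫ x in s, q x ∂μ) ^ 2 = μ.real s ^ 2 * ((μ.real s)⁻¹ * ∫ x in s, q x ∂μ) ^ 2 := by
        field_simp
    _ ≤ μ.real s ^ 2 * ((μ.real s)⁻¹ * ∫ x in s, q x ^ 2 ∂μ) := by gcongr
    _ = μ.real s * ∫ x in s, q x ^ 2 ∂μ := by field_simp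

lemma dist_le_sqrt_energy_mul_sqrt_dist {v q : ℝ → ℝ} (hv : ∀ x, HasDerivAt v (q x) x)
    (hq : Continuous q) (a b : ℝ) :
    dist (v a) (v b) ≤ √(∫ x in uIoc a b, q x ^ 2) * √(dist a b) := by
  have ftc : ∫ x in a..b, q x = v b - v a :=
    intervalIntegral.integral_eq_sub_of_hasDerivAt (fun x _ => hv x) (hq.intervalIntegrable a b)
  have integrable_sq : IntegrableOn (fun x => q x ^ 2) (uIoc a b) :=
    ((hq.pow 2).intervalIntegrable a b).def'
  have cs := sq_setIntegral_le_mul_setIntegral_sq (s := uIoc a b) (by simp [uIoc])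
    (hq.intervalIntegrable a b).def' integrable_sq
  have volume_eq : volume.real (uIoc a b) = dist a b := by
    rw [uIoc, volume_real_Ioc_of_le min_le_max, max_sub_min_eq_abs', Real.dist_eq]
  rw [dist_comm, Real.dist_eq, ← ftc, intervalIntegral.abs_intervalIntegral_eq,
    ← Real.sqrt_mul (setIntegral_nonneg measurableSet_uIoc fun _ _ => sq_nonneg _)]
  apply Real.le_sqrt_of_sq_le
  rwa [sq_abs, mul_comm, ← volume_eq]

lemma EnergyBoundOn.of_hasDerivAt {v q : ℝ → ℝ} {a b C : ℝ} (hv : ∀ x, HasDerivAt v (q x) x)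
    (hq : Continuous q) (hab : a ≤ b) (hC : ∫ x in a..b, q x ^ 2 ≤ C) :
    EnergyBoundOn v a b C := by
  rintro ⟨n, I⟩ hE
  set s : ℕ → Set ℝ := fun i => uIoc (I i).1 (I i).2
  have integrable_sq (c d : ℝ) : IntegrableOn (fun x => q x ^ 2) (uIoc c d) :=
    ((hq.pow 2).intervalIntegrable c d).def'
  have energy_le : ∑ i ∈ Finset.range n, ∫ x in s i, q x ^ 2 ≤ C := by
    rw [← integral_biUnion_finset (Finset.range n) (fun i _ => measurableSet_uIoc) hE.2
      (fun i _ => integrable_sq _ _)]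
    refine (setIntegral_mono_set (integrable_sq a b) (.of_forall fun x => sq_nonneg _)
      (AbsolutelyContinuousOnInterval.biUnion_uIoc_subset_of_mem_disjWithin hE).eventuallyLE).trans
      ?_
    rwa [uIoc_of_le hab, ← intervalIntegral.integral_of_le hab]
  calc ∑ i ∈ Finset.range n, dist (v (I i).1) (v (I i).2)
      ≤ ∑ i ∈ Finset.range n, √(∫ x in s i, q x ^ 2) * √(dist (I i).1 (I i).2) :=
        Finset.sum_le_sum fun i _ => dist_le_sqrt_energy_mul_sqrt_dist hv hq _ _
    _ ≤ √(∑ i ∈ Finset.range n, ∫ x in s i, q x ^ 2) *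
          √(∑ i ∈ Finset.range n, dist (I i).1 (I i).2) :=
        Real.sum_sqrt_mul_sqrt_le _
          (fun i => setIntegral_nonneg measurableSet_uIoc fun _ _ => sq_nonneg _)
          (fun i => dist_nonneg)
    _ ≤ √C * √(∑ i ∈ Finset.range n, dist (I i).1 (I i).2) := by gcongr

lemma EnergyBoundOn.of_tendsto {ι : Type*} {l : Filter ι} [l.NeBot] {v : ι → ℝ → ℝ} {u : ℝ → ℝ}
    {a b C : ℝ} (hv : ∀ i, EnergyBoundOn (v i) a b C)
    (hu : ∀ x, Tendsto (fun i => v i x) l (𝓝 (u x))) : EnergyBoundOn u a b C := fun E hE =>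
  le_of_tendsto (tendsto_finsetSum _ fun _ _ => (hu _).dist (hu _))
    (.of_forall fun i => hv i E hE)

lemma EnergyBoundOn.absolutelyContinuousOnInterval {u : ℝ → ℝ} {a b C : ℝ}
    (hu : EnergyBoundOn u a b C) : AbsolutelyContinuousOnInterval u a b := by
  have length_tendsto : Tendsto
      (fun E : ℕ × (ℕ → ℝ × ℝ) => ∑ i ∈ Finset.range E.1, dist (E.2 i).1 (E.2 i).2)
      (AbsolutelyContinuousOnInterval.totalLengthFilter ⊓ 𝓟 (disjWithin a b)) (𝓝 0) :=
    tendsto_comap.mono_left inf_le_left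
  refine squeeze_zero' (.of_forall fun E => Finset.sum_nonneg fun _ _ => dist_nonneg)
    (mem_inf_of_right fun E hE => hu E hE) ?_
  simpa using length_tendsto.sqrt.const_mul √C

lemma EnergyBoundOn.eVariationOn_le {u : ℝ → ℝ} {a b C : ℝ} (hu : EnergyBoundOn u a b C)
    (hab : a ≤ b) : eVariationOn u (Icc a b) ≤ ENNReal.ofReal √(C * (b - a)) := by
  refine iSup_le ?_
  rintro ⟨n, t, t_mono, t_mem⟩
  have hE : (n, fun i => (t i, t (i + 1))) ∈ disjWithin a b := by
    refine ⟨fun i _ => by simpa only [uIcc_of_le hab] using ⟨t_mem i, t_mem (i + 1)⟩, ?_⟩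
    intro i _ j _ hij
    change Disjoint (uIoc _ _) (uIoc _ _)
    rw [uIoc_of_le (t_mono i.le_succ), uIoc_of_le (t_mono j.le_succ)]
    exact t_mono.pairwise_disjoint_on_Ioc_succ hij
  have length_le : ∑ i ∈ Finset.range n, dist (t i) (t (i + 1)) ≤ b - a := by
    calc ∑ i ∈ Finset.range n, dist (t i) (t (i + 1))
        = ∑ i ∈ Finset.range n, (t (i + 1) - t i) := Finset.sum_congr rfl fun i _ => by
          rw [dist_comm, Real.dist_eq, abs_of_nonneg (sub_nonneg.2 (t_mono i.le_succ))]
      _ = t n - t 0 := Finset.sum_range_sub t n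
      _ ≤ b - a := by linarith [(t_mem n).2, (t_mem 0).1]
  have sum_eq : ∑ i ∈ Finset.range n, edist (u (t (i + 1))) (u (t i)) =
      ENNReal.ofReal (∑ i ∈ Finset.range n, dist (u (t i)) (u (t (i + 1)))) := by
    rw [ENNReal.ofReal_sum_of_nonneg fun _ _ => dist_nonneg]
    exact Finset.sum_congr rfl fun i _ => by rw [edist_comm, edist_dist]
  refine sum_eq.trans_le (ENNReal.ofReal_le_ofReal ((hu _ hE).trans ?_))
  rw [mul_comm C, Real.sqrt_mul (sub_nonneg.2 hab), mul_comm]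
  gcongr

lemma abs_deriv_le_deriv_variationOnFromTo {u : ℝ → ℝ} {a b x : ℝ}
    (hu : LocallyBoundedVariationOn u (Icc a b)) (hx : x ∈ Ioo a b)
    (hV : DifferentiableAt ℝ (variationOnFromTo u (Icc a b) a) x) :
    |deriv u x| ≤ deriv (variationOnFromTo u (Icc a b) a) x := by
  have V_mono := variationOnFromTo.monotoneOn hu (left_mem_Icc.2 (hx.1.trans hx.2).le)
  by_cases hux : DifferentiableAt ℝ u x
  swap
  · rw [deriv_zero_of_not_differentiableAt hux, abs_zero,
      ← derivWithin_of_mem_nhds (Icc_mem_nhds hx.1 hx.2)]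
    exact V_mono.derivWithin_nonneg
  refine le_of_tendsto_of_tendsto (hux.hasDerivAt.tendsto_slope.mono_left
      (nhdsGT_le_nhdsNE x)).abs (hV.hasDerivAt.tendsto_slope.mono_left (nhdsGT_le_nhdsNE x)) ?_
  filter_upwards [Ioo_mem_nhdsGT hx.2] with y hy
  have hxy : 0 < y - x := sub_pos.2 hy.1
  rw [slope_def_field, slope_def_field, abs_div, abs_of_pos hxy]
  gcongr
  have xmem : x ∈ Icc a b := Ioo_subset_Icc_self hx
  have ymem : y ∈ Icc a b := ⟨hx.1.le.trans hy.1.le, hy.2.le⟩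
  exact variationOnFromTo.abs_sub_le_sub_of_le hu (left_mem_Icc.2 (hx.1.trans hx.2).le) xmem ymem
    hy.1.le

lemma EnergyBoundOn.integral_abs_deriv_le {u : ℝ → ℝ} {a b C : ℝ} (hu : EnergyBoundOn u a b C)
    (hab : a ≤ b) : ∫ x in a..b, |deriv u x| ≤ √(C * (b - a)) := by
  have bounded_var : BoundedVariationOn u (Icc a b) :=
    ne_top_of_le_ne_top ENNReal.ofReal_ne_top (hu.eVariationOn_le hab)
  have loc := bounded_var.locallyBoundedVariationOn
  set V := variationOnFromTo u (Icc a b) a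
  have V_mono : MonotoneOn V (uIcc a b) := by
    rw [uIcc_of_le hab]
    exact variationOnFromTo.monotoneOn loc (left_mem_Icc.2 hab)
  have V_diff : ∀ᵐ x ∂volume.restrict (Ioo a b), DifferentiableAt ℝ V x := by
    rw [ae_restrict_iff' measurableSet_Ioo]
    filter_upwards [V_mono.ae_differentiableWithinAt_of_mem] with x hx hxI
    rw [uIcc_of_le hab] at hx
    exact (hx (Ioo_subset_Icc_self hxI)).differentiableAt (Icc_mem_nhds hxI.1 hxI.2)
  have V_total : V b - V a ≤ √(C * (b - a)) := by
    rw [show V a = 0 from variationOnFromTo.self u _ a, sub_zero]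
    refine (le_abs_self _).trans ((variationOnFromTo.abs_le_eVariationOn bounded_var).trans ?_)
    exact ENNReal.toReal_le_of_le_ofReal (Real.sqrt_nonneg _) (hu.eVariationOn_le hab)
  have V_increase : V a ≤ V b := V_mono left_mem_uIcc right_mem_uIcc hab
  have integral_deriv_V := V_mono.intervalIntegral_deriv_mem_uIcc
  rw [uIcc_of_le (sub_nonneg.2 V_increase)] at integral_deriv_V
  refine le_trans ?_ (integral_deriv_V.2.trans V_total)
  refine intervalIntegral.integral_mono_ae_restrict hab
    (hu.absolutelyContinuousOnInterval.intervalIntegrable_deriv.abs)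
    V_mono.intervalIntegrable_deriv ?_
  rw [← restrict_Ioo_eq_restrict_Icc]
  filter_upwards [V_diff, ae_restrict_mem measurableSet_Ioo] with x hx hxI
  exact abs_deriv_le_deriv_variationOnFromTo loc hxI hx

/-! ### Elementary kernels of the half-plane -/

/-- The Poisson kernel of the upper half-plane at height `y`, without its factor `1 / π`. -/
def halfPlanePoisson (y t : ℝ) : ℝ := y / (t ^ 2 + y ^ 2)

/-- The conjugate Poisson kernel of the upper half-plane at height `y`, without its factor
`1 / π`. -/
def conjPoisson (y t : ℝ) : ℝ := t / (t ^ 2 + y ^ 2)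

/-- The difference `1 / t - conjPoisson y t` between the Cauchy and the conjugate Poisson kernel,
in the form in which it enters the operator `H`. -/
def cauchyDefect (y t : ℝ) : ℝ := t⁻¹ * (y ^ 2 / (t ^ 2 + y ^ 2))

/-- The difference `log √(t² + y²) - log |t|` between the real parts of the logarithm at height `y`
and on the real axis. -/
def logGap (y t : ℝ) : ℝ := log (t ^ 2 + y ^ 2) / 2 - log t

lemma conjPoisson_add_cauchyDefect {t : ℝ} (ht : t ≠ 0) (y : ℝ) :
    conjPoisson y t + cauchyDefect y t = t⁻¹ := by
  unfold conjPoisson cauchyDefect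
  have : t ^ 2 + y ^ 2 ≠ 0 := by positivity
  field_simp

lemma abs_conjPoisson_le {y : ℝ} (hy : 0 < y) (t : ℝ) : |conjPoisson y t| ≤ y⁻¹ := by
  rw [conjPoisson, abs_div, abs_of_pos (show 0 < t ^ 2 + y ^ 2 by positivity),
    div_le_iff₀ (by positivity), ← sq_abs t]
  have : y⁻¹ * (|t| ^ 2 + y ^ 2) = |t| ^ 2 / y + y := by field_simp
  rw [this, ← sub_nonneg]
  have : |t| ^ 2 / y + y - |t| = ((|t| - y / 2) ^ 2 + 3 / 4 * y ^ 2) / y := by field_simp; ring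
  rw [this]
  positivity

lemma halfPlanePoisson_nonneg {y : ℝ} (hy : 0 ≤ y) (t : ℝ) : 0 ≤ halfPlanePoisson y t := by
  unfold halfPlanePoisson
  positivity

lemma continuous_halfPlanePoisson {y : ℝ} (hy : 0 < y) : Continuous (halfPlanePoisson y) :=
  continuous_const.div (by fun_prop) fun t => by positivity

lemma continuous_conjPoisson {y : ℝ} (hy : 0 < y) : Continuous (conjPoisson y) :=
  continuous_id.div (by fun_prop) fun t => by positivity

lemma halfPlanePoisson_eq {y : ℝ} (hy : 0 < y) :
    halfPlanePoisson y = fun t => y⁻¹ * (1 + (t / y) ^ 2)⁻¹ := by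
  funext t
  unfold halfPlanePoisson
  field_simp
  ring

lemma integrable_halfPlanePoisson {y : ℝ} (hy : 0 < y) : Integrable (halfPlanePoisson y) := by
  rw [halfPlanePoisson_eq hy]
  exact (integrable_inv_one_add_sq.comp_div hy.ne').const_mul _

lemma integral_halfPlanePoisson {y : ℝ} (hy : 0 < y) : ∫ t, halfPlanePoisson y t = π := by
  rw [halfPlanePoisson_eq hy, integral_const_mul,
    Measure.integral_comp_div (fun t => (1 + t ^ 2)⁻¹) y, integral_univ_inv_one_add_sq,
    abs_of_pos hy, smul_eq_mul]
  field_simp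

lemma logGap_neg (y t : ℝ) : logGap y (-t) = logGap y t := by
  simp only [logGap, even_two.neg_pow, log_neg_eq_log]

lemma logGap_eq {y t : ℝ} (ht : t ≠ 0) : logGap y t = log (1 + y ^ 2 / t ^ 2) / 2 := by
  have h : 1 + y ^ 2 / t ^ 2 = (t ^ 2 + y ^ 2) / t ^ 2 := by field_simp
  rw [h, log_div (by positivity) (by positivity), log_pow, logGap]
  push_cast
  ring

lemma logGap_nonneg {y t : ℝ} (ht : t ≠ 0) : 0 ≤ logGap y t := by
  rw [logGap_eq ht]
  exact div_nonneg (log_nonneg (le_add_of_nonneg_right (by positivity))) zero_le_two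

lemma hasDerivAt_half_log_sq_add_sq {y : ℝ} (hy : 0 < y) (t : ℝ) :
    HasDerivAt (fun t => log (t ^ 2 + y ^ 2) / 2) (conjPoisson y t) t := by
  have h : HasDerivAt (fun t : ℝ => t ^ 2 + y ^ 2) (2 * t) t := by
    simpa using (hasDerivAt_pow 2 t).add_const (y ^ 2)
  refine ((h.log (by positivity)).div_const 2).congr_deriv ?_
  unfold conjPoisson
  ring

lemma hasDerivAt_logGap_primitive {y t : ℝ} (hy : 0 < y) (ht : t ≠ 0) :
    HasDerivAt (fun t => t * (log (t ^ 2 + y ^ 2) / 2) - t * log t + y * arctan (t / y))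
      (logGap y t) t := by
  have h₁ := (hasDerivAt_id t).mul (hasDerivAt_half_log_sq_add_sq hy t)
  have h₂ := (hasDerivAt_id t).mul (hasDerivAt_log ht)
  have h₃ := ((hasDerivAt_arctan (t / y)).comp t ((hasDerivAt_id t).div_const y)).const_mul y
  refine ((h₁.sub h₂).add h₃).congr_deriv ?_
  have : t ^ 2 + y ^ 2 ≠ 0 := by positivity
  have : 1 + (t / y) ^ 2 ≠ 0 := by positivity
  simp only [logGap, conjPoisson, id]
  field_simp
  ring

lemma tendsto_logGap_primitive {y : ℝ} (hy : 0 < y) :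
    Tendsto (fun t => t * (log (t ^ 2 + y ^ 2) / 2) - t * log t + y * arctan (t / y))
      atTop (𝓝 (y * (π / 2))) := by
  have hgap : Tendsto (fun t : ℝ => t * logGap y t) atTop (𝓝 0) := by
    refine squeeze_zero' ?_ ?_ ((tendsto_const_nhds (x := y ^ 2 / 2)).div_atTop tendsto_id)
    · filter_upwards [eventually_gt_atTop 0] with t ht
      exact mul_nonneg ht.le (logGap_nonneg ht.ne')
    · filter_upwards [eventually_gt_atTop 0] with t ht
      calc t * logGap y t = t * (log (1 + y ^ 2 / t ^ 2) / 2) := by rw [logGap_eq ht.ne']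
        _ ≤ t * ((1 + y ^ 2 / t ^ 2 - 1) / 2) := by
          gcongr
          exact log_le_sub_one_of_pos (by positivity)
        _ = y ^ 2 / 2 / t := by field_simp; ring
  have harctan : Tendsto (fun t => y * arctan (t / y)) atTop (𝓝 (y * (π / 2))) :=
    ((tendsto_arctan_atTop.mono_right nhdsWithin_le_nhds).comp
      (tendsto_id.atTop_div_const hy)).const_mul y
  simpa only [logGap, mul_sub, zero_add] using hgap.add harctan

lemma continuous_logGap_primitive {y : ℝ} (hy : 0 < y) :
    Continuous fun t => t * (log (t ^ 2 + y ^ 2) / 2) - t * log t + y * arctan (t / y) := by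
  have hlog : Continuous fun t : ℝ => log (t ^ 2 + y ^ 2) :=
    Continuous.log (by fun_prop) fun t => by positivity
  exact ((continuous_id.mul (hlog.div_const 2)).sub continuous_mul_log).add (by fun_prop)

lemma integrable_logGap {y : ℝ} (hy : 0 < y) : Integrable (logGap y) := by
  have hIoi : IntegrableOn (logGap y) (Ioi 0) :=
    integrableOn_Ioi_deriv_of_nonneg (continuous_logGap_primitive hy).continuousWithinAt
      (fun t ht => hasDerivAt_logGap_primitive hy (ne_of_gt ht))
      (fun t ht => logGap_nonneg (ne_of_gt ht)) (tendsto_logGap_primitive hy)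
  have hIic : IntegrableOn (logGap y) (Iic 0) := by
    simpa only [logGap_neg] using
      (show IntegrableOn (logGap y) (Ici (-0)) by
        rwa [neg_zero, integrableOn_Ici_iff_integrableOn_Ioi]).comp_neg_Iic
  rw [← integrableOn_univ, ← Iic_union_Ioi (a := (0 : ℝ))]
  exact hIic.union hIoi

lemma integral_logGap {y : ℝ} (hy : 0 < y) : ∫ t, logGap y t = π * y := by
  have habs : logGap y = fun t => logGap y |t| := by
    funext t
    rcases abs_choice t with h | h <;> simp only [h, logGap_neg]
  rw [habs, integral_comp_abs,
    integral_Ioi_of_hasDerivAt_of_nonneg (continuous_logGap_primitive hy).continuousWithinAt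
      (fun t ht => hasDerivAt_logGap_primitive hy (ne_of_gt ht))
      (fun t ht => logGap_nonneg (ne_of_gt ht)) (tendsto_logGap_primitive hy)]
  simp only [zero_mul, zero_div, arctan_zero, mul_zero, sub_zero, add_zero]
  ring

lemma integral_abs_mul_halfPlanePoisson {y b : ℝ} (hy : 0 < y) (hb : 0 ≤ b) :
    ∫ t in -b..b, |t| * halfPlanePoisson y t = y * log (1 + b ^ 2 / y ^ 2) := by
  have hcont : Continuous fun t => |t| * halfPlanePoisson y t :=
    continuous_abs.mul (continuous_halfPlanePoisson hy)
  have hpos : ∫ t in (0 : ℝ)..b, |t| * halfPlanePoisson y t = y * logGap b y := by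
    rw [intervalIntegral.integral_eq_sub_of_hasDerivAt
      (f := fun t => y * (log (t ^ 2 + y ^ 2) / 2)) (fun t ht => ?_) (hcont.intervalIntegrable _ _)]
    · simp only [logGap, zero_pow two_ne_zero, zero_add, log_pow]
      push_cast
      ring_nf
    · rw [uIcc_of_le hb] at ht
      refine ((hasDerivAt_half_log_sq_add_sq hy t).const_mul y).congr_deriv ?_
      rw [abs_of_nonneg ht.1, halfPlanePoisson, conjPoisson]
      ring
  have hneg : ∫ t in -b..0, |t| * halfPlanePoisson y t = y * logGap b y := by
    have h := intervalIntegral.integral_comp_neg (a := -b) (b := 0)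
      fun t => |t| * halfPlanePoisson y t
    rw [neg_zero, neg_neg, hpos] at h
    simpa only [abs_neg, halfPlanePoisson, even_two.neg_pow] using h
  rw [← intervalIntegral.integral_add_adjacent_intervals (hcont.intervalIntegrable _ _)
    (hcont.intervalIntegrable _ _), hpos, hneg, logGap_eq hy.ne']
  ring

lemma integral_abs_mul_halfPlanePoisson_le {ε b : ℝ} (hε : ε ∈ Ioc (0 : ℝ) (1 / 10)) (hb : 0 ≤ b)
    (hb2 : b ^ 2 ≤ 9 * ε) :
    ∫ t in -b..b, |t| * halfPlanePoisson ε t ≤ 2 * ε * log (1 / ε) := by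
  obtain ⟨h0, h1⟩ := hε
  have hlog : log (1 + b ^ 2 / ε ^ 2) ≤ 2 * log (1 / ε) := by
    rw [← log_rpow (by positivity)]
    refine log_le_log (by positivity) ?_
    have h : 1 + b ^ 2 / ε ^ 2 = (ε ^ 2 + b ^ 2) / ε ^ 2 := by field_simp
    rw [rpow_two, div_pow, one_pow, h]
    gcongr
    nlinarith
  calc ∫ t in -b..b, |t| * halfPlanePoisson ε t = ε * log (1 + b ^ 2 / ε ^ 2) :=
        integral_abs_mul_halfPlanePoisson h0 hb
    _ ≤ ε * (2 * log (1 / ε)) := by gcongr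
    _ = 2 * ε * log (1 / ε) := by ring

/-! ### Potentials of bounded densities -/

/-- A density on the real line that is bounded by `M` and vanishes off `(-a, a)`. -/
structure IsBoundedDensity (k : ℝ → ℝ) (M a : ℝ) : Prop where
  measurable : Measurable k
  abs_le : ∀ x, |k x| ≤ M
  eq_zero_of_notMem : ∀ x, x ∉ Ioo (-a) a → k x = 0

/-- The logarithmic potential of the density `k` on the real axis (recall `Real.log t = log |t|`).
Its derivative is the principal value integral of `k β / (x - β)`. -/
def logPotential (k : ℝ → ℝ) (x : ℝ) : ℝ := ∫ β, k β * log (x - β)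

/-- The logarithmic potential of the density `k` at the point `x + iy`. -/
def logPotentialAt (k : ℝ → ℝ) (y x : ℝ) : ℝ := ∫ β, k β * (log ((x - β) ^ 2 + y ^ 2) / 2)

/-- The convolution of the density `k` with `halfPlanePoisson y`. -/
def poissonIntegral (k : ℝ → ℝ) (y x : ℝ) : ℝ := ∫ β, k β * halfPlanePoisson y (x - β)

/-- The convolution of the density `k` with `conjPoisson y`. -/
def conjPoissonIntegral (k : ℝ → ℝ) (y x : ℝ) : ℝ := ∫ β, k β * conjPoisson y (x - β)

/-- The Cauchy integral of the density `k`, without normalizing factor. -/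
def cauchyTransform (k : ℝ → ℝ) (z : ℂ) : ℂ := ∫ β, k β • (z - β)⁻¹

/-- The primitive of the Cauchy integral of `k` in the upper half-plane whose real part is the
logarithmic potential. -/
def complexLogPotential (k : ℝ → ℝ) (z : ℂ) : ℂ := ∫ β, k β • Complex.log (z - β)

lemma locallyIntegrable_log : LocallyIntegrable log := fun x =>
  ⟨Icc (x - 1) (x + 1), Icc_mem_nhds (by linarith) (by linarith),
    (intervalIntegrable_iff_integrableOn_Icc_of_le (by linarith)).1
      intervalIntegral.intervalIntegrable_log'⟩

lemma continuous_half_log_sq_add_sq {y : ℝ} (hy : 0 < y) :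
    Continuous fun t => log (t ^ 2 + y ^ 2) / 2 :=
  continuous_iff_continuousAt.2 fun t => (hasDerivAt_half_log_sq_add_sq hy t).continuousAt

namespace IsBoundedDensity

variable {k : ℝ → ℝ} {M a : ℝ}

lemma bound_nonneg (hk : IsBoundedDensity k M a) : 0 ≤ M :=
  (abs_nonneg _).trans (hk.abs_le 0)

section

variable {E : Type*} [NormedAddCommGroup E] [NormedSpace ℝ E] {K : ℝ → E}

lemma integrable_smul (hk : IsBoundedDensity k M a) (hK : IntegrableOn K (Ioo (-a) a)) :
    Integrable fun β => k β • K β := by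
  refine (integrableOn_iff_integrable_of_support_subset (s := Ioo (-a) a) fun β hβ => ?_).1
    (Integrable.bdd_smul hK M hk.measurable.aestronglyMeasurable (ae_of_all _ hk.abs_le))
  by_contra h
  simp [hk.eq_zero_of_notMem β h] at hβ

lemma norm_integral_smul_le (hk : IsBoundedDensity k M a) (hK : IntegrableOn K (Ioo (-a) a)) :
    ‖∫ β, k β • K β‖ ≤ M * ∫ β in Ioo (-a) a, ‖K β‖ := by
  have hsupp : ∫ β, k β • K β = ∫ β in Ioo (-a) a, k β • K β :=
    (setIntegral_eq_integral_of_forall_compl_eq_zero fun β hβ => by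
      rw [hk.eq_zero_of_notMem β hβ, zero_smul]).symm
  rw [hsupp, ← integral_const_mul]
  refine norm_integral_le_of_norm_le (hK.norm.const_mul M) (ae_of_all _ fun β => ?_)
  rw [norm_smul]
  exact mul_le_mul_of_nonneg_right (hk.abs_le β) (norm_nonneg _)

end

protected lemma integrable (hk : IsBoundedDensity k M a) : Integrable k := by
  have h : Integrable fun β => k β • (1 : ℝ) :=
    hk.integrable_smul (integrableOn_const measure_Ioo_lt_top.ne)
  simpa using h

lemma abs_integral_mul_comp_sub_le (hk : IsBoundedDensity k M a) {K : ℝ → ℝ} (hK : Integrable K)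
    (hK0 : 0 ≤ᵐ[volume] K) (x : ℝ) : |∫ β, k β * K (x - β)| ≤ M * ∫ t, K t := by
  have h_int := hK.comp_sub_left x
  have hnonneg : ∀ᵐ β, 0 ≤ K (x - β) :=
    (Measure.measurePreserving_sub_left volume x).quasiMeasurePreserving.ae hK0
  rw [← integral_sub_left_eq_self K volume x, ← integral_const_mul, ← Real.norm_eq_abs]
  refine norm_integral_le_of_norm_le (h_int.const_mul M) ?_
  filter_upwards [hnonneg] with β hβ
  rw [norm_mul, norm_of_nonneg hβ]
  exact mul_le_mul_of_nonneg_right (hk.abs_le β) hβ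

lemma abs_poissonIntegral_le (hk : IsBoundedDensity k M a) {y : ℝ} (hy : 0 < y) (x : ℝ) :
    |poissonIntegral k y x| ≤ M * π :=
  integral_halfPlanePoisson hy ▸ hk.abs_integral_mul_comp_sub_le (integrable_halfPlanePoisson hy)
    (ae_of_all _ (halfPlanePoisson_nonneg hy.le)) x

lemma integrable_mul_comp_sub (hk : IsBoundedDensity k M a) {K : ℝ → ℝ}
    (hK : LocallyIntegrable K) (x : ℝ) : Integrable fun β => k β * K (x - β) := by
  refine hk.integrable_smul (IntegrableOn.mono_set ?_ Ioo_subset_Icc_self)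
  have h := (Measure.measurePreserving_sub_left volume x).integrableOn_comp_preimage
    (Homeomorph.subLeft x).measurableEmbedding (f := K) (s := Icc (x - a) (x + a))
  simp only [preimage_const_sub_Icc, sub_add_cancel_left, sub_sub_cancel] at h
  exact h.2 (hK.integrableOn_isCompact isCompact_Icc)

lemma abs_logPotential_sub_logPotentialAt_le (hk : IsBoundedDensity k M a) {y : ℝ} (hy : 0 < y)
    (x : ℝ) : |logPotential k x - logPotentialAt k y x| ≤ M * (π * y) := by
  rw [abs_sub_comm, logPotential, logPotentialAt, ← integral_sub
    (hk.integrable_mul_comp_sub (continuous_half_log_sq_add_sq hy).locallyIntegrable x)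
    (hk.integrable_mul_comp_sub locallyIntegrable_log x), ← integral_logGap hy]
  simp only [← mul_sub]
  refine hk.abs_integral_mul_comp_sub_le (integrable_logGap hy) ?_ x
  filter_upwards [compl_mem_ae_iff.2 (measure_singleton (0 : ℝ))] with t ht
  exact logGap_nonneg ht

lemma hasDerivAt_complexLogPotential (hk : IsBoundedDensity k M a) {z : ℂ} (hz : 0 < z.im) :
    HasDerivAt (complexLogPotential k) (cauchyTransform k z) z := by
  have him : ∀ w ∈ Metric.ball z (z.im / 2), ∀ β : ℝ, z.im / 2 ≤ (w - β).im := by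
    intro w hw β
    have := (Complex.abs_im_le_norm (w - z)).trans (mem_ball_iff_norm.1 hw).le
    rw [Complex.sub_im] at this
    rw [Complex.sub_im, Complex.ofReal_im]
    linarith [neg_le_of_abs_le this]
  have hcont : Continuous fun β : ℝ => Complex.log (z - β) :=
    Continuous.clog (by fun_prop) fun β => Or.inr (by simp [hz.ne'])
  have hmeas := hk.measurable
  refine (hasDerivAt_integral_of_dominated_loc_of_deriv_le
    (F' := fun w β => k β • (w - β)⁻¹) (bound := fun β => |k β| * (z.im / 2)⁻¹)
    (Metric.ball_mem_nhds z (half_pos hz))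
    (Eventually.of_forall fun w => by fun_prop)
    (hk.integrable_smul (hcont.integrableOn_Icc.mono_set Ioo_subset_Icc_self))
    (by fun_prop) (ae_of_all _ fun β w hw => ?_) (hk.integrable.abs.mul_const _)
    (ae_of_all _ fun β w hw => ?_)).2
  · rw [norm_smul, norm_inv, Real.norm_eq_abs]
    gcongr
    exact (him w hw β).trans ((le_abs_self _).trans (Complex.abs_im_le_norm _))
  · have hslit : w - β ∈ Complex.slitPlane := Or.inr ((half_pos hz).trans_le (him w hw β)).ne'
    refine ((((hasDerivAt_id w).sub_const (β : ℂ)).clog hslit).const_smul (k β)).congr_deriv ?_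
    simp

lemma differentiableOn_cauchyTransform (hk : IsBoundedDensity k M a) :
    DifferentiableOn ℂ (cauchyTransform k) {z | 0 < z.im} := by
  have hopen : IsOpen {z : ℂ | 0 < z.im} := isOpen_lt continuous_const Complex.continuous_im
  have hdiff : DifferentiableOn ℂ (complexLogPotential k) {z | 0 < z.im} := fun z hz =>
    (hk.hasDerivAt_complexLogPotential hz).differentiableAt.differentiableWithinAt
  exact (hdiff.deriv hopen).congr fun z hz => (hk.hasDerivAt_complexLogPotential hz).deriv.symm

lemma re_complexLogPotential (hk : IsBoundedDensity k M a) {y : ℝ} (hy : 0 < y) (x : ℝ) :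
    (complexLogPotential k (x + y * Complex.I)).re = logPotentialAt k y x := by
  have hcont : Continuous fun β : ℝ => Complex.log (x + y * Complex.I - β) :=
    Continuous.clog (by fun_prop) fun β => Or.inr (by simp [hy.ne'])
  have h_int := hk.integrable_smul (hcont.integrableOn_Icc.mono_set Ioo_subset_Icc_self)
  refine (Complex.reCLM.integral_comp_comm h_int).symm.trans (integral_congr_ae (ae_of_all _ ?_))
  intro β
  simp only [Complex.reCLM_apply, Complex.smul_re, Complex.log_re, smul_eq_mul,
    Complex.norm_eq_sqrt_sq_add_sq]
  rw [log_sqrt (by positivity)]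
  simp

lemma cauchyTransform_eq (hk : IsBoundedDensity k M a) {y : ℝ} (hy : 0 < y) (x : ℝ) :
    cauchyTransform k (x + y * Complex.I) =
      conjPoissonIntegral k y x - poissonIntegral k y x * Complex.I := by
  have hcont : Continuous fun β : ℝ => (x + y * Complex.I - β : ℂ)⁻¹ :=
    Continuous.inv₀ (by fun_prop) fun β h => hy.ne' (by simpa using congr_arg Complex.im h)
  have h_int := hk.integrable_smul (hcont.integrableOn_Icc.mono_set Ioo_subset_Icc_self)
  apply Complex.ext
  · refine (Complex.reCLM.integral_comp_comm h_int).symm.trans ?_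
    simp [conjPoissonIntegral, conjPoisson, Complex.normSq_apply, sq]
  · refine (Complex.imCLM.integral_comp_comm h_int).symm.trans ?_
    simp [poissonIntegral, halfPlanePoisson, Complex.normSq_apply, sq, neg_div, integral_neg]

lemma continuousOn_cauchyTransform_graph (hk : IsBoundedDensity k M a) {X : ℝ → ℝ} {s : Set ℝ}
    (hX : ContinuousOn X s) (hX0 : ∀ x ∈ s, 0 < X x) :
    ContinuousOn (fun x : ℝ => cauchyTransform k (x + X x * Complex.I)) s :=
  hk.differentiableOn_cauchyTransform.continuousOn.comp (by fun_prop) fun x hx => by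
    simpa using hX0 x hx

lemma continuousOn_conjPoissonIntegral (hk : IsBoundedDensity k M a) {X : ℝ → ℝ} {s : Set ℝ}
    (hX : ContinuousOn X s) (hX0 : ∀ x ∈ s, 0 < X x) :
    ContinuousOn (fun x => conjPoissonIntegral k (X x) x) s :=
  (Complex.continuous_re.comp_continuousOn (hk.continuousOn_cauchyTransform_graph hX hX0)).congr
    fun x hx => by simp [hk.cauchyTransform_eq (hX0 x hx)]

lemma continuousOn_poissonIntegral (hk : IsBoundedDensity k M a) {X : ℝ → ℝ} {s : Set ℝ}
    (hX : ContinuousOn X s) (hX0 : ∀ x ∈ s, 0 < X x) :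
    ContinuousOn (fun x => poissonIntegral k (X x) x) s :=
  (Complex.continuous_im.comp_continuousOn
    (hk.continuousOn_cauchyTransform_graph hX hX0)).neg.congr
    fun x hx => by simp [hk.cauchyTransform_eq (hX0 x hx)]

lemma hasDerivAt_logPotentialAt_graph (hk : IsBoundedDensity k M a) {X : ℝ → ℝ} {p x : ℝ}
    (hX : HasDerivAt X p x) (hX0 : 0 < X x) :
    HasDerivAt (fun x => logPotentialAt k (X x) x)
      (conjPoissonIntegral k (X x) x + p * poissonIntegral k (X x) x) x := by
  have hγ : HasDerivAt (fun x : ℝ => (x + X x * Complex.I : ℂ)) (1 + p * Complex.I) x :=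
    (hasDerivAt_id x).ofReal_comp.add (hX.ofReal_comp.mul_const Complex.I)
  have him : 0 < (x + X x * Complex.I : ℂ).im := by simpa using hX0
  have hre := Complex.reCLM.hasFDerivAt.comp_hasDerivAt x
    ((hk.hasDerivAt_complexLogPotential him).scomp x hγ)
  refine (hre.congr_deriv ?_).congr_of_eventuallyEq ?_
  · simp [hk.cauchyTransform_eq hX0]
  · filter_upwards [hX.continuousAt.eventually (lt_mem_nhds hX0)] with t ht
    exact (hk.re_complexLogPotential ht t).symm

end IsBoundedDensity

/-! ### The Dirichlet energy of the logarithmic potential -/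

lemma norm_integral_rect_bottom_le {F : ℂ → ℂ} {z w : ℂ} {B : ℝ}
    (hF : DifferentiableOn ℂ F (uIcc z.re w.re ×ℂ uIcc z.im w.im))
    (htop : ∀ x ∈ uIcc z.re w.re, ‖F (x + w.im * Complex.I)‖ ≤ B)
    (hleft : ∀ y ∈ uIcc z.im w.im, ‖F (z.re + y * Complex.I)‖ ≤ B)
    (hright : ∀ y ∈ uIcc z.im w.im, ‖F (w.re + y * Complex.I)‖ ≤ B) :
    ‖∫ x in z.re..w.re, F (x + z.im * Complex.I)‖ ≤
      B * (|w.re - z.re| + 2 * |w.im - z.im|) := by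
  have hrect := Complex.integral_boundary_rect_eq_zero_of_differentiableOn F z w hF
  have ht := intervalIntegral.norm_integral_le_of_norm_le_const fun x hx =>
    htop x (uIoc_subset_uIcc hx)
  have hl := intervalIntegral.norm_integral_le_of_norm_le_const fun y hy =>
    hleft y (uIoc_subset_uIcc hy)
  have hr := intervalIntegral.norm_integral_le_of_norm_le_const fun y hy =>
    hright y (uIoc_subset_uIcc hy)
  set T := ∫ x in z.re..w.re, F (x + w.im * Complex.I)
  set L := ∫ y in z.im..w.im, F (z.re + y * Complex.I)
  set R := ∫ y in z.im..w.im, F (w.re + y * Complex.I)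
  calc ‖∫ x in z.re..w.re, F (x + z.im * Complex.I)‖ = ‖T - Complex.I • R + Complex.I • L‖ := by
        congr 1
        linear_combination hrect
    _ ≤ ‖T‖ + ‖R‖ + ‖L‖ := by
        refine (norm_add_le _ _).trans (add_le_add (norm_sub_le _ _) le_rfl |>.trans_eq ?_)
        simp only [norm_smul, Complex.norm_I, one_mul]
    _ ≤ B * (|w.re - z.re| + 2 * |w.im - z.im|) := by linarith

namespace IsBoundedDensity

variable {k : ℝ → ℝ} {M a : ℝ}

lemma norm_cauchyTransform_le (hk : IsBoundedDensity k M a) (ha : 0 < a) {z : ℂ}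
    (hz : ∀ β ∈ Ioo (-a) a, a ≤ ‖z - (β : ℝ)‖) : ‖cauchyTransform k z‖ ≤ 2 * M := by
  have hle : ∀ β ∈ Ioo (-a) a, ‖(z - (β : ℝ))⁻¹‖ ≤ a⁻¹ := fun β hβ => by
    rw [norm_inv]
    exact inv_anti₀ ha (hz β hβ)
  have h_int : IntegrableOn (fun β : ℝ => (z - β)⁻¹) (Ioo (-a) a) :=
    Measure.integrableOn_of_bounded measure_Ioo_lt_top.ne
      (by fun_prop : Measurable fun β : ℝ => (z - β)⁻¹).aestronglyMeasurable
      ((ae_restrict_iff' measurableSet_Ioo).2 (ae_of_all _ hle))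
  calc ‖cauchyTransform k z‖ ≤ M * ∫ β in Ioo (-a) a, ‖(z - (β : ℝ))⁻¹‖ :=
        hk.norm_integral_smul_le h_int
    _ ≤ M * ∫ _ in Ioo (-a) a, a⁻¹ :=
        mul_le_mul_of_nonneg_left
          (setIntegral_mono_on h_int.norm (integrableOn_const measure_Ioo_lt_top.ne)
            measurableSet_Ioo hle) hk.bound_nonneg
    _ = 2 * M := by
        rw [setIntegral_const, volume_real_Ioo_of_le (by linarith), smul_eq_mul]
        field_simp
        ring

lemma norm_integral_cauchyTransform_sq_le (hk : IsBoundedDensity k M a) (ha : 0 < a) {y : ℝ}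
    (hy : 0 < y) :
    ‖∫ x in -(2 * a)..2 * a, cauchyTransform k (x + y * Complex.I) ^ 2‖ ≤ 24 * M ^ 2 * a := by
  have hsq {z : ℂ} (hz : ∀ β ∈ Ioo (-a) a, a ≤ ‖z - (β : ℝ)‖) :
      ‖cauchyTransform k z ^ 2‖ ≤ (2 * M) ^ 2 := by
    rw [norm_pow]
    exact pow_le_pow_left₀ (norm_nonneg _) (hk.norm_cauchyTransform_le ha hz) 2
  have h := norm_integral_rect_bottom_le (F := fun z => cauchyTransform k z ^ 2)
    (z := ⟨-(2 * a), y⟩) (w := ⟨2 * a, y + a⟩) (B := (2 * M) ^ 2)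
    ((hk.differentiableOn_cauchyTransform.pow 2).mono fun u hu => ?_)
    (fun x _ => hsq fun β _ => (Complex.abs_im_le_norm _).trans' ?_)
    (fun x _ => hsq fun β hβ => (Complex.abs_re_le_norm _).trans' ?_)
    (fun x _ => hsq fun β hβ => (Complex.abs_re_le_norm _).trans' ?_)
  · refine h.trans_eq ?_
    simp only [sub_neg_eq_add, add_sub_cancel_left, abs_of_pos ha,
      abs_of_pos (show 0 < 2 * a + 2 * a by linarith)]
    ring
  · have him : u.im ∈ uIcc y (y + a) := hu.2
    rw [uIcc_of_le (by linarith)] at him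
    exact hy.trans_le him.1
  · simp only [Complex.sub_im, Complex.add_im, Complex.ofReal_im, Complex.im_ofReal_mul,
      Complex.I_im]
    refine (le_abs_self _).trans' ?_
    linarith
  · refine (neg_le_abs _).trans' ?_
    simp only [Complex.sub_re, Complex.add_re, Complex.ofReal_re, Complex.re_ofReal_mul,
      Complex.I_re, mul_zero, add_zero]
    linarith [hβ.1]
  · refine (le_abs_self _).trans' ?_
    simp only [Complex.sub_re, Complex.add_re, Complex.ofReal_re, Complex.re_ofReal_mul,
      Complex.I_re, mul_zero, add_zero]
    linarith [hβ.2]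

lemma integral_conjPoissonIntegral_sq_le (hk : IsBoundedDensity k M a) (ha : 0 < a) {y : ℝ}
    (hy : 0 < y) : ∫ x in -(2 * a)..2 * a, conjPoissonIntegral k y x ^ 2 ≤ 64 * M ^ 2 * a := by
  have hcont {u : ℝ → ℝ} (hu : ContinuousOn u univ) :
      IntervalIntegrable (fun x => u x ^ 2) volume (-(2 * a)) (2 * a) :=
    ((continuousOn_univ.1 hu).pow 2).intervalIntegrable _ _
  have hQ := hcont (hk.continuousOn_conjPoissonIntegral continuousOn_const fun _ _ => hy)
  have hP := hcont (hk.continuousOn_poissonIntegral continuousOn_const fun _ _ => hy)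
  have hC : Continuous fun x : ℝ => cauchyTransform k (x + y * Complex.I) ^ 2 :=
    (continuousOn_univ.1
      (hk.continuousOn_cauchyTransform_graph continuousOn_const fun _ _ => hy)).pow 2
  have hre : (∫ x in -(2 * a)..2 * a, cauchyTransform k (x + y * Complex.I) ^ 2).re =
      (∫ x in -(2 * a)..2 * a, conjPoissonIntegral k y x ^ 2) -
        ∫ x in -(2 * a)..2 * a, poissonIntegral k y x ^ 2 := by
    rw [← intervalIntegral.integral_sub hQ hP]
    refine (Complex.reCLM.intervalIntegral_comp_comm (hC.intervalIntegrable _ _)).symm.trans ?_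
    congr 1
    funext x
    simp [hk.cauchyTransform_eq hy, sq]
  have hPle : ∫ x in -(2 * a)..2 * a, poissonIntegral k y x ^ 2 ≤ 10 * M ^ 2 * (4 * a) := by
    have hpi : π ^ 2 ≤ 10 := by nlinarith [pi_lt_d2, pi_pos]
    have h := intervalIntegral.integral_mono_on (by linarith) hP
      (intervalIntegrable_const (c := 10 * M ^ 2)) fun x _ => by
        calc poissonIntegral k y x ^ 2 ≤ (M * π) ^ 2 :=
              sq_le_sq' (neg_le_of_abs_le (hk.abs_poissonIntegral_le hy x))
                (le_of_abs_le (hk.abs_poissonIntegral_le hy x))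
          _ ≤ 10 * M ^ 2 := by nlinarith [sq_nonneg M]
    rw [intervalIntegral.integral_const, smul_eq_mul] at h
    linarith
  have hCle := (Complex.re_le_norm _).trans (hk.norm_integral_cauchyTransform_sq_le ha hy)
  linarith

lemma energyBoundOn_logPotential (hk : IsBoundedDensity k M a) (ha : 0 < a) :
    EnergyBoundOn (logPotential k) (-(2 * a)) (2 * a) (64 * M ^ 2 * a) := by
  have hy (n : ℕ) : (0 : ℝ) < 1 / (n + 1) := Nat.one_div_pos_of_nat
  refine EnergyBoundOn.of_tendsto (l := atTop) (v := fun n : ℕ => logPotentialAt k (1 / (n + 1)))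
    (fun n => ?_) fun x => ?_
  · refine EnergyBoundOn.of_hasDerivAt (fun x => ?_) (continuousOn_univ.1
      (hk.continuousOn_conjPoissonIntegral continuousOn_const fun _ _ => hy n)) (by linarith)
      (hk.integral_conjPoissonIntegral_sq_le ha (hy n))
    simpa using hk.hasDerivAt_logPotentialAt_graph (hasDerivAt_const x _) (hy n)
  · have hlim : Tendsto (fun n : ℕ => M * (π * (1 / ((n : ℝ) + 1)))) atTop (𝓝 0) := by
      simpa using (tendsto_one_div_add_atTop_nhds_zero_nat.const_mul π).const_mul M
    refine tendsto_iff_norm_sub_tendsto_zero.2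
      (squeeze_zero (fun _ => norm_nonneg _) (fun n => ?_) hlim)
    rw [norm_sub_rev]
    exact hk.abs_logPotential_sub_logPotentialAt_le (hy n) x

lemma integral_abs_deriv_logPotential_le (hk : IsBoundedDensity k M a) (ha : 0 < a) :
    ∫ x in -(2 * a)..2 * a, |deriv (logPotential k) x| ≤ 16 * M * a := by
  refine ((hk.energyBoundOn_logPotential ha).integral_abs_deriv_le (by linarith)).trans_eq ?_
  rw [show 64 * M ^ 2 * a * (2 * a - -(2 * a)) = (16 * M * a) ^ 2 by ring]
  exact sqrt_sq (mul_nonneg (mul_nonneg (by norm_num) hk.bound_nonneg) ha.le)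

end IsBoundedDensity

/-! ### Lebesgue points and principal values -/

/-- `α` is a Lebesgue point of `h`: the mean deviation of `h` from `h α` on small balls around `α`
tends to `0`. -/
def IsLebesguePoint (h : ℝ → ℝ) (α : ℝ) : Prop :=
  Tendsto (fun r => ⨍ y in Metric.closedBall α r, ‖h y - h α‖) (𝓝[>] 0) (𝓝 0)

lemma ae_isLebesguePoint {h : ℝ → ℝ} (hh : LocallyIntegrable h) : ∀ᵐ α, IsLebesguePoint h α := by
  filter_upwards [IsUnifLocDoublingMeasure.ae_tendsto_average_norm_sub (μ := volume) hh 1]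
    with α hα
  refine hα (fun _ => α) id tendsto_id ?_
  filter_upwards [self_mem_nhdsWithin] with r hr
  simpa using (mem_Ioi.1 hr).le

lemma integral_norm_sub_rescale (h : ℝ → ℝ) (α : ℝ) {r N : ℝ} (hr : 0 < r) (hN : 0 < N) :
    ∫ u in -N..N, ‖h (α - r * u) - h α‖ =
      2 * N * ⨍ y in Metric.closedBall α (r * N), ‖h y - h α‖ := by
  have hle : α - r * N ≤ α + r * N := by linarith [mul_pos hr hN]
  rw [intervalIntegral.integral_comp_sub_mul (fun y => ‖h y - h α‖) hr.ne' α, mul_neg,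
    sub_neg_eq_add, setAverage_eq, closedBall_eq_Icc, volume_real_Icc_of_le hle,
    integral_Icc_eq_integral_Ioc, ← intervalIntegral.integral_of_le hle]
  simp only [smul_eq_mul]
  field_simp
  ring

namespace IsLebesguePoint

variable {h K : ℝ → ℝ} {M α : ℝ}

lemma tendsto_integral_mul_of_hasCompactSupport (hα : IsLebesguePoint h α) (hm : Measurable h)
    (hb : ∀ x, |h x| ≤ M) (hK : Continuous K) (hKc : HasCompactSupport K) :
    Tendsto (fun r => ∫ u, (h (α - r * u) - h α) * K u) (𝓝[>] 0) (𝓝 0) := by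
  obtain ⟨B, hB⟩ := hKc.exists_bound_of_continuous hK
  obtain ⟨N, hN0, hN⟩ := hKc.isCompact.isBounded.subset_ball_lt 0 0
  have hscale : Tendsto (fun r => r * N) (𝓝[>] 0) (𝓝[>] 0) :=
    tendsto_nhdsWithin_iff.2 ⟨by
      simpa using (tendsto_id.mul_const N).mono_left (nhdsWithin_le_nhds (a := (0 : ℝ))), by
      filter_upwards [self_mem_nhdsWithin] with r hr using mul_pos hr hN0⟩
  refine squeeze_zero_norm' ?_ (by
    simpa using (hα.comp hscale).const_mul (2 * N * B))
  filter_upwards [self_mem_nhdsWithin] with r hr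
  have hsupp : ∀ u ∉ Ioc (-N) N, (h (α - r * u) - h α) * K u = 0 := fun u hu => by
    have hu' : u ∉ tsupport K := fun h =>
      hu (Ioo_subset_Ioc_self (by simpa [Real.ball_eq_Ioo] using hN h))
    rw [image_eq_zero_of_notMem_tsupport hu', mul_zero]
  have h_int : IntervalIntegrable (fun u => ‖h (α - r * u) - h α‖ * B) volume (-N) N := by
    refine (intervalIntegrable_iff.2 (Measure.integrableOn_of_bounded (M := M + M) ?_ ?_
      (ae_of_all _ fun u => ?_))).mul_const B
    · simp [uIoc]
    · exact (by fun_prop : Measurable fun u => ‖h (α - r * u) - h α‖).aestronglyMeasurable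
    · rw [norm_norm]
      exact (norm_sub_le _ _).trans (add_le_add (hb _) (hb _))
  rw [← setIntegral_eq_integral_of_forall_compl_eq_zero hsupp,
    ← intervalIntegral.integral_of_le (by linarith)]
  calc ‖∫ u in -N..N, (h (α - r * u) - h α) * K u‖ ≤ ∫ u in -N..N, ‖h (α - r * u) - h α‖ * B :=
        intervalIntegral.norm_integral_le_of_norm_le (by linarith) (ae_of_all _ fun u _ => by
          rw [norm_mul]
          exact mul_le_mul_of_nonneg_left (hB u) (norm_nonneg _)) h_int
    _ = 2 * N * B * ⨍ y in Metric.closedBall α (r * N), ‖h y - h α‖ := by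
        rw [intervalIntegral.integral_mul_const, integral_norm_sub_rescale h α hr hN0]
        ring

lemma tendsto_integral_mul (hα : IsLebesguePoint h α) (hm : Measurable h)
    (hb : ∀ x, |h x| ≤ M) (hK : Integrable K) :
    Tendsto (fun r => ∫ u, (h (α - r * u) - h α) * K u) (𝓝[>] 0) (𝓝 0) := by
  have hM : 0 ≤ M := (abs_nonneg _).trans (hb 0)
  refine Metric.tendsto_nhds.2 fun e he => ?_
  obtain ⟨K', hK'c, hK'le, hK'cont, hK'int⟩ := hK.exists_hasCompactSupport_integral_sub_le
    (ε := e / (4 * (M + 1))) (by positivity)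
  filter_upwards [Metric.tendsto_nhds.1
    (hα.tendsto_integral_mul_of_hasCompactSupport hm hb hK'cont hK'c) (e / 2) (half_pos he)]
    with r hr
  rw [dist_zero_right] at hr ⊢
  have hmeas : AEStronglyMeasurable (fun u => h (α - r * u) - h α) :=
    (by fun_prop : Measurable fun u => h (α - r * u) - h α).aestronglyMeasurable
  have hosc : ∀ u, ‖h (α - r * u) - h α‖ ≤ 2 * M := fun u =>
    (norm_sub_le _ _).trans ((add_le_add (hb _) (hb _)).trans_eq (two_mul M).symm)
  have hsplit : ∫ u, (h (α - r * u) - h α) * K u =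
      (∫ u, (h (α - r * u) - h α) * (K u - K' u)) + ∫ u, (h (α - r * u) - h α) * K' u := by
    have hdiff : Integrable fun u => (h (α - r * u) - h α) * (K u - K' u) :=
      (hK.sub hK'int).bdd_mul hmeas (ae_of_all _ hosc)
    rw [← integral_add hdiff (hK'int.bdd_mul hmeas (ae_of_all _ hosc))]
    simp only [← mul_add, sub_add_cancel]
  have herr : ‖∫ u, (h (α - r * u) - h α) * (K u - K' u)‖ ≤ e / 2 := by
    calc ‖∫ u, (h (α - r * u) - h α) * (K u - K' u)‖ ≤ ∫ u, 2 * M * ‖K u - K' u‖ :=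
          norm_integral_le_of_norm_le ((hK.sub hK'int).norm.const_mul _) (ae_of_all _ fun u => by
            rw [norm_mul]
            exact mul_le_mul_of_nonneg_right (hosc u) (norm_nonneg _))
      _ = 2 * M * ∫ u, ‖K u - K' u‖ := integral_const_mul _ _
      _ ≤ 2 * (M + 1) * (e / (4 * (M + 1))) := by gcongr; linarith
      _ = e / 2 := by field_simp; ring
  rw [hsplit]
  exact (norm_add_le _ _).trans_lt (by linarith)

end IsLebesguePoint

/-- The kernel that turns the symmetric difference quotient of the logarithmic potential at scale
`1` into the Cauchy kernel truncated at distance `1`. -/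
def truncationDefect (u : ℝ) : ℝ :=
  (if 1 < |u| then u⁻¹ else 0) - (log (u + 1) - log (u - 1)) / 2

lemma truncationDefect_neg (u : ℝ) : truncationDefect (-u) = -truncationDefect u := by
  have hadd : log (-u + 1) = log (u - 1) := by rw [← log_neg_eq_log, neg_add', neg_neg]
  have hsub : log (-u - 1) = log (u + 1) := by rw [← log_neg_eq_log, neg_sub', neg_neg,
    sub_neg_eq_add]
  rw [truncationDefect, truncationDefect, hadd, hsub, abs_neg, inv_neg]
  split_ifs <;> ring

lemma integral_truncationDefect : ∫ u, truncationDefect u = 0 := by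
  have h : ∫ u, truncationDefect (-u) = ∫ u, truncationDefect u := integral_neg_eq_self _ volume
  simp only [truncationDefect_neg, integral_neg] at h
  linarith

lemma measurable_truncated_inv (r : ℝ) : Measurable fun u : ℝ => if r < |u| then u⁻¹ else 0 :=
  Measurable.ite (measurableSet_lt measurable_const (by fun_prop)) measurable_inv measurable_const

lemma abs_truncated_inv_le {r : ℝ} (hr : 0 < r) (u : ℝ) :
    |if r < |u| then u⁻¹ else 0| ≤ r⁻¹ := by
  split_ifs with h
  · rw [abs_inv]
    exact inv_anti₀ hr h.le
  · simpa using hr.le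

lemma abs_truncationDefect_le {u : ℝ} (hu : 2 < |u|) :
    |truncationDefect u| ≤ 4 * (1 + u ^ 2)⁻¹ := by
  have hu0 : u ≠ 0 := abs_pos.1 (by linarith)
  have hu2 : 4 < u ^ 2 := by
    rw [← sq_abs]
    nlinarith
  set v := u⁻¹ with hv
  have : v ≠ 0 := inv_ne_zero hu0
  have hv1 : |v| < 1 / 2 := by
    rw [hv, abs_inv, one_div]
    exact inv_strictAnti₀ two_pos hu
  have hlog {x : ℝ} (hx : |x| < 1 / 2) : |x + log (1 - x)| ≤ 2 * x ^ 2 := by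
    have h := abs_log_sub_add_sum_range_le (x := x) (by linarith) 1
    norm_num at h
    refine h.trans ?_
    rw [div_le_iff₀ (by linarith)]
    nlinarith [sq_nonneg x]
  have hexpand : truncationDefect u = (v + log (1 - v)) / 2 - (-v + log (1 - -v)) / 2 := by
    have hadd : u + 1 = (1 - -v) * u := by rw [hv]; field_simp; ring
    have hsub : u - 1 = (1 - v) * u := by rw [hv]; field_simp
    rw [truncationDefect, if_pos (by linarith), hadd, hsub,
      log_mul (by linarith [abs_lt.1 hv1]) hu0, log_mul (by linarith [abs_lt.1 hv1]) hu0]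
    ring
  have hle : |truncationDefect u| ≤ 2 * v ^ 2 := by
    have h₁ := hlog hv1
    have h₂ := hlog (x := -v) (by rwa [abs_neg])
    rw [abs_le] at h₁ h₂
    rw [hexpand, abs_le]
    constructor <;> linarith [neg_sq v]
  refine hle.trans ?_
  rw [hv, inv_pow, ← div_eq_mul_inv, ← div_eq_mul_inv,
    div_le_div_iff₀ (by linarith) (by linarith)]
  linarith

lemma integrable_truncationDefect : Integrable truncationDefect := by
  have hlog : IntegrableOn (fun u => (log (u + 1) - log (u - 1)) / 2) (Icc (-2) 2) := by
    refine (intervalIntegrable_iff_integrableOn_Icc_of_le (by norm_num)).1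
      (.div_const (.sub ?_ ?_) 2)
    · simpa using (intervalIntegral.intervalIntegrable_log'
        (a := -2 + 1) (b := 2 + 1)).comp_add_right 1
    · simpa using (intervalIntegral.intervalIntegrable_log'
        (a := -2 - 1) (b := 2 - 1)).comp_sub_right 1
  have hinv : IntegrableOn (fun u : ℝ => if 1 < |u| then u⁻¹ else 0) (Icc (-2) 2) :=
    Measure.integrableOn_of_bounded (by simp) (measurable_truncated_inv 1).aestronglyMeasurable
      (ae_of_all _ (abs_truncated_inv_le one_pos))
  have hmeas : Measurable truncationDefect :=
    (measurable_truncated_inv 1).sub (by fun_prop)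
  rw [← integrableOn_univ, ← union_compl_self (Icc (-2 : ℝ) 2)]
  refine (hinv.sub hlog).union
    (((integrable_inv_one_add_sq.const_mul 4).integrableOn).mono' hmeas.aestronglyMeasurable
      ((ae_restrict_iff' measurableSet_Icc.compl).2 (ae_of_all _ fun u hu => ?_)))
  exact abs_truncationDefect_le (not_le.1 fun h => hu (abs_le.1 h))

lemma truncated_inv_eq {r t : ℝ} (hr : 0 < r) (hadd : t + r ≠ 0) (hsub : t - r ≠ 0) :
    (if r < |t| then t⁻¹ else 0) =
      (log (t + r) - log (t - r)) / (2 * r) + r⁻¹ * truncationDefect (t / r) := by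
  have hlt : 1 < |t / r| ↔ r < |t| := by rw [abs_div, abs_of_pos hr, one_lt_div hr]
  rw [truncationDefect, div_add_one hr.ne', div_sub_one hr.ne', log_div hadd hr.ne',
    log_div hsub hr.ne']
  simp only [hlt]
  split_ifs <;> field_simp <;> ring

lemma tendsto_symmetric_slope {u : ℝ → ℝ} {G α : ℝ} (hu : HasDerivAt u G α) :
    Tendsto (fun r => (u (α + r) - u (α - r)) / (2 * r)) (𝓝[>] 0) (𝓝 G) := by
  have hadd : HasDerivAt (fun r => u (α + r)) G 0 := by
    simpa using HasDerivAt.comp_const_add α 0 (by simpa using hu)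
  have hsub : HasDerivAt (fun r => u (α - r)) (-G) 0 := by
    simpa using HasDerivAt.comp_const_sub α 0 (by simpa using hu)
  have hslope := ((hadd.sub hsub).tendsto_slope_zero_right).div_const 2
  rw [sub_neg_eq_add, add_self_div_two] at hslope
  refine hslope.congr fun r => ?_
  simp only [Pi.sub_apply, zero_add, add_zero, sub_zero, sub_self, smul_eq_mul]
  ring

namespace IsBoundedDensity

variable {k : ℝ → ℝ} {M a : ℝ}

lemma tendsto_integral_mul_truncationDefect (hk : IsBoundedDensity k M a) {α : ℝ}
    (hα : IsLebesguePoint k α) :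
    Tendsto (fun r => ∫ β, k β * (r⁻¹ * truncationDefect ((α - β) / r))) (𝓝[>] 0) (𝓝 0) := by
  refine (hα.tendsto_integral_mul hk.measurable hk.abs_le integrable_truncationDefect).congr' ?_
  filter_upwards [self_mem_nhdsWithin] with r (hr : 0 < r)
  have hmeas : AEStronglyMeasurable (fun u => k (α - r * u)) :=
    (hk.measurable.comp (by fun_prop)).aestronglyMeasurable
  have h_int : Integrable fun u => k (α - r * u) * truncationDefect u :=
    integrable_truncationDefect.bdd_mul hmeas (ae_of_all _ fun u => hk.abs_le _)
  calc ∫ u, (k (α - r * u) - k α) * truncationDefect u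
      = ∫ u, k (α - r * u) * truncationDefect u := by
        simp only [sub_mul]
        rw [integral_sub h_int (integrable_truncationDefect.const_mul _), integral_const_mul,
          integral_truncationDefect, mul_zero, sub_zero]
    _ = r⁻¹ * ∫ t, k (α - r * (t / r)) * truncationDefect (t / r) := by
        rw [Measure.integral_comp_div (fun u => k (α - r * u) * truncationDefect u), abs_of_pos hr,
          smul_eq_mul, inv_mul_cancel_left₀ hr.ne']
    _ = ∫ t, k (α - t) * (r⁻¹ * truncationDefect (t / r)) := by
        rw [← integral_const_mul]
        simp only [mul_div_cancel₀ _ hr.ne', mul_left_comm]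
    _ = ∫ β, k β * (r⁻¹ * truncationDefect ((α - β) / r)) := by
        rw [← integral_sub_left_eq_self _ volume α]
        simp only [sub_sub_cancel]

lemma integrable_mul_truncated_inv (hk : IsBoundedDensity k M a) (α : ℝ) {r : ℝ} (hr : 0 < r) :
    Integrable fun β => k β * if r < |α - β| then (α - β)⁻¹ else 0 :=
  hk.integrable.mul_bdd
    ((measurable_truncated_inv r).comp (measurable_const.sub measurable_id)).aestronglyMeasurable
    (ae_of_all _ fun β => abs_truncated_inv_le hr (α - β))

lemma integral_truncated_inv_eq (hk : IsBoundedDensity k M a) (α : ℝ) {r : ℝ} (hr : 0 < r) :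
    ∫ β in {β | r < |α - β|}, k β * (α - β)⁻¹ =
      (logPotential k (α + r) - logPotential k (α - r)) / (2 * r) +
        ∫ β, k β * (r⁻¹ * truncationDefect ((α - β) / r)) := by
  have hlog (x : ℝ) := hk.integrable_mul_comp_sub locallyIntegrable_log x
  have hslope : Integrable fun β => (k β * log (α + r - β) - k β * log (α - r - β)) / (2 * r) :=
    ((hlog _).sub (hlog _)).div_const _
  have hpoint : ∀ᵐ β, k β * (if r < |α - β| then (α - β)⁻¹ else 0) =
      (k β * log (α + r - β) - k β * log (α - r - β)) / (2 * r) +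
        k β * (r⁻¹ * truncationDefect ((α - β) / r)) := by
    filter_upwards [compl_mem_ae_iff.2 (measure_singleton (μ := volume) (α + r)),
      compl_mem_ae_iff.2 (measure_singleton (μ := volume) (α - r))] with β hadd hsub
    rw [truncated_inv_eq hr (t := α - β) (fun h => hadd (by simp; linarith))
      (fun h => hsub (by simp; linarith)), sub_add_eq_add_sub, sub_right_comm α β r]
    ring
  have hdefect : Integrable fun β => k β * (r⁻¹ * truncationDefect ((α - β) / r)) := by
    refine ((hk.integrable_mul_truncated_inv α hr).sub hslope).congr (hpoint.mono fun β hβ => ?_)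
    simp only [Pi.sub_apply]
    rw [hβ, add_sub_cancel_left]
  calc ∫ β in {β | r < |α - β|}, k β * (α - β)⁻¹
      = ∫ β, k β * if r < |α - β| then (α - β)⁻¹ else 0 := by
        rw [← integral_indicator (measurableSet_lt measurable_const (by fun_prop))]
        simp only [indicator_apply, mem_ofPred_eq, mul_ite, mul_zero]
    _ = _ := by
        rw [integral_congr_ae hpoint, integral_add hslope hdefect, integral_div,
          integral_sub (hlog _) (hlog _)]
        rfl

/-- The symmetric difference quotients of the logarithmic potential and the truncated Cauchy
integrals differ by an approximate identity of mean zero. -/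
lemma tendsto_integral_truncated_inv (hk : IsBoundedDensity k M a) {G α : ℝ}
    (hd : HasDerivAt (logPotential k) G α) (hα : IsLebesguePoint k α) :
    Tendsto (fun r => ∫ β in {β | r < |α - β|}, k β * (α - β)⁻¹) (𝓝[>] 0) (𝓝 G) := by
  rw [← add_zero G]
  refine ((tendsto_symmetric_slope hd).add
    (hk.tendsto_integral_mul_truncationDefect hα)).congr' ?_
  filter_upwards [self_mem_nhdsWithin] with r hr
  exact (hk.integral_truncated_inv_eq α hr).symm

lemma ae_tendsto_integral_truncated_inv (hk : IsBoundedDensity k M a) (ha : 0 < a) :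
    ∀ᵐ α, α ∈ Ioo (-a) a → Tendsto (fun r => ∫ β in {β | r < |α - β|}, k β * (α - β)⁻¹) (𝓝[>] 0)
      (𝓝 (deriv (logPotential k) α)) := by
  filter_upwards [(hk.energyBoundOn_logPotential
      ha).absolutelyContinuousOnInterval.ae_differentiableAt,
    ae_isLebesguePoint hk.integrable.locallyIntegrable] with α hdiff hα hmem
  refine hk.tendsto_integral_truncated_inv (hdiff ?_).hasDerivAt hα
  rw [uIcc_of_le (by linarith)]
  exact ⟨by linarith [hmem.1], by linarith [hmem.2]⟩

end IsBoundedDensity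

/-! ### Integration by parts -/

lemma abs_integral_deriv_mul_le {u F : ℝ → ℝ} {a b K B : ℝ}
    (hu : AbsolutelyContinuousOnInterval u a b) (hF : AbsolutelyContinuousOnInterval F a b)
    (hFa : F a = 0) (hFb : F b = 0) (hK : ∀ x ∈ uIcc a b, |u x| ≤ K)
    (hB : ∀ x ∈ uIcc a b, |deriv F x| ≤ B) :
    |∫ x in a..b, deriv u x * F x| ≤ K * B * |b - a| := by
  have hK0 : 0 ≤ K := (abs_nonneg _).trans (hK a left_mem_uIcc)
  simp only [mul_comm (deriv u _)]
  rw [hF.integral_mul_deriv_eq_deriv_mul hu, hFa, hFb, zero_mul, zero_mul, sub_self, zero_sub,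
    abs_neg, ← norm_eq_abs]
  simp only [mul_comm (deriv F _)]
  refine intervalIntegral.norm_integral_le_of_norm_le_const fun x hx => ?_
  rw [norm_mul]
  exact mul_le_mul (hK x (uIoc_subset_uIcc hx)) (hB x (uIoc_subset_uIcc hx)) (norm_nonneg _) hK0

namespace IsBoundedDensity

variable {k X : ℝ → ℝ} {M a r c : ℝ}

lemma contDiffOn_logPotentialAt_graph (hk : IsBoundedDensity k M a)
    (hX : ContDiffOn ℝ 1 X (Ioo (-r) r)) (hX0 : ∀ x ∈ Ioo (-r) r, 0 < X x) :
    ContDiffOn ℝ 1 (fun x => logPotentialAt k (X x) x) (Ioo (-r) r) := by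
  have hderiv : ∀ x ∈ Ioo (-r) r, HasDerivAt (fun x => logPotentialAt k (X x) x)
      (conjPoissonIntegral k (X x) x + deriv X x * poissonIntegral k (X x) x) x := fun x hx =>
    hk.hasDerivAt_logPotentialAt_graph
      ((hX.differentiableOn one_ne_zero).hasDerivAt (isOpen_Ioo.mem_nhds hx)) (hX0 x hx)
  refine (contDiffOn_succ_iff_deriv_of_isOpen (n := 0) isOpen_Ioo).2
    ⟨fun x hx => (hderiv x hx).differentiableAt.differentiableWithinAt, by simp, ?_⟩
  refine contDiffOn_zero.2 (ContinuousOn.congr ?_ fun x hx => (hderiv x hx).deriv)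
  exact (hk.continuousOn_conjPoissonIntegral hX.continuousOn hX0).add
    ((hX.continuousOn_deriv_of_isOpen isOpen_Ioo le_rfl).mul
      (hk.continuousOn_poissonIntegral hX.continuousOn hX0))

lemma absolutelyContinuousOnInterval_logPotential (hk : IsBoundedDensity k M a) (ha : 0 < a)
    (hc : 0 ≤ c) (hca : c ≤ 2 * a) : AbsolutelyContinuousOnInterval (logPotential k) (-c) c :=
  (hk.energyBoundOn_logPotential ha).absolutelyContinuousOnInterval.mono <| by
    rw [uIcc_of_le (by linarith), uIcc_of_le (by linarith)]
    exact Icc_subset_Icc (by linarith) hca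

lemma ae_deriv_logPotential_sub_graph (hk : IsBoundedDensity k M a) (ha : 0 < a) (hra : r ≤ 2 * a)
    (hX : ContDiffOn ℝ 1 X (Ioo (-r) r)) (hX0 : ∀ x ∈ Ioo (-r) r, 0 < X x) :
    ∀ᵐ x, x ∈ Ioo (-r) r → deriv (fun x => logPotential k x - logPotentialAt k (X x) x) x =
      deriv (logPotential k) x - conjPoissonIntegral k (X x) x -
        deriv X x * poissonIntegral k (X x) x := by
  filter_upwards [(hk.energyBoundOn_logPotential
    ha).absolutelyContinuousOnInterval.ae_differentiableAt] with x hdiff hx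
  have hx' : x ∈ uIcc (-(2 * a)) (2 * a) := by
    rw [uIcc_of_le (by linarith)]
    exact ⟨by linarith [hx.1], by linarith [hx.2]⟩
  rw [((hdiff hx').hasDerivAt.fun_sub (hk.hasDerivAt_logPotentialAt_graph
    ((hX.differentiableOn one_ne_zero).hasDerivAt (isOpen_Ioo.mem_nhds hx)) (hX0 x hx))).deriv]
  ring

lemma abs_integral_slope_mul_poissonIntegral_mul_le (hk : IsBoundedDensity k M a) {F : ℝ → ℝ}
    {b X₁ B₀ : ℝ} (hX0 : ∀ x ∈ uIcc b c, 0 < X x) (hX'_le : ∀ x ∈ uIcc b c, |deriv X x| ≤ X₁)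
    (hF_le : ∀ x ∈ uIcc b c, |F x| ≤ B₀) :
    |∫ x in b..c, deriv X x * poissonIntegral k (X x) x * F x| ≤
      X₁ * (M * π) * B₀ * |c - b| := by
  rw [← norm_eq_abs]
  refine intervalIntegral.norm_integral_le_of_norm_le_const fun x hx => ?_
  have hx := uIoc_subset_uIcc hx
  have hX₁ := (abs_nonneg _).trans (hX'_le x hx)
  rw [norm_mul, norm_mul]
  exact mul_le_mul (mul_le_mul (hX'_le x hx) (hk.abs_poissonIntegral_le (hX0 x hx) x)
    (norm_nonneg _) hX₁) (hF_le x hx) (norm_nonneg _)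
    (mul_nonneg hX₁ (mul_nonneg hk.bound_nonneg pi_pos.le))

/-- The difference of the potential on the line and on the graph of `X` is of size `X`, which is
what the derivative falling on `F` costs; the slope of the graph contributes a Poisson integral. -/
lemma abs_integral_deriv_logPotential_sub_mul_le (hk : IsBoundedDensity k M a) {X₀ X₁ B₀ B₁ : ℝ}
    (ha : 0 < a) (hra : r ≤ 2 * a) (hc : 0 ≤ c) (hcr : c < r)
    (hX : ContDiffOn ℝ 1 X (Ioo (-r) r)) (hX0 : ∀ x ∈ Ioo (-r) r, 0 < X x)
    (hX_le : ∀ x ∈ Icc (-c) c, X x ≤ X₀) (hX'_le : ∀ x ∈ Icc (-c) c, |deriv X x| ≤ X₁)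
    {F : ℝ → ℝ} (hF : ContDiffOn ℝ 1 F (Icc (-c) c)) (hFl : F (-c) = 0) (hFr : F c = 0)
    (hF_le : ∀ x ∈ Icc (-c) c, |F x| ≤ B₀) (hF'_le : ∀ x ∈ Icc (-c) c, |deriv F x| ≤ B₁) :
    |∫ x in -c..c, (deriv (logPotential k) x - conjPoissonIntegral k (X x) x) * F x| ≤
      2 * c * π * M * (X₀ * B₁ + X₁ * B₀) := by
  have hcc : uIcc (-c) c = Icc (-c) c := uIcc_of_le (by linarith)
  have hsub : uIcc (-c) c ⊆ Ioo (-r) r := hcc ▸ fun x hx => ⟨by linarith [hx.1], hx.2.trans_lt hcr⟩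
  set u : ℝ → ℝ := fun x => logPotential k x - logPotentialAt k (X x) x
  have hu : AbsolutelyContinuousOnInterval u (-c) c :=
    (hk.absolutelyContinuousOnInterval_logPotential ha hc (by linarith)).fun_sub
      ((hk.contDiffOn_logPotentialAt_graph hX hX0).mono hsub).absolutelyContinuousOnInterval
  have hFac : AbsolutelyContinuousOnInterval F (-c) c :=
    (hF.mono hcc.subset).absolutelyContinuousOnInterval
  have hslope : IntervalIntegrable (fun x => deriv X x * poissonIntegral k (X x) x * F x)
      volume (-c) c :=
    ((((hX.continuousOn_deriv_of_isOpen isOpen_Ioo le_rfl).mul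
      (hk.continuousOn_poissonIntegral hX.continuousOn hX0)).mono hsub).mul
        hFac.continuousOn).intervalIntegrable
  have hsplit : ∫ x in -c..c, (deriv (logPotential k) x - conjPoissonIntegral k (X x) x) * F x =
      (∫ x in -c..c, deriv u x * F x) +
        ∫ x in -c..c, deriv X x * poissonIntegral k (X x) x * F x := by
    rw [← intervalIntegral.integral_add
      (hu.intervalIntegrable_deriv.mul_continuousOn hFac.continuousOn) hslope]
    refine intervalIntegral.integral_congr_ae ?_
    filter_upwards [hk.ae_deriv_logPotential_sub_graph ha hra hX hX0] with x hderiv hx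
    rw [hderiv (hsub (uIoc_subset_uIcc hx))]
    ring
  have hpart : |∫ x in -c..c, deriv u x * F x| ≤ M * (π * X₀) * B₁ * |c - -c| :=
    abs_integral_deriv_mul_le hu hFac hFl hFr (fun x hx =>
      (hk.abs_logPotential_sub_logPotentialAt_le (hX0 x (hsub hx)) x).trans
        (mul_le_mul_of_nonneg_left (mul_le_mul_of_nonneg_left (hX_le x (hcc ▸ hx)) pi_pos.le)
          hk.bound_nonneg)) fun x hx => hF'_le x (hcc ▸ hx)
  have hgraph := hk.abs_integral_slope_mul_poissonIntegral_mul_le (F := F)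
    (fun x hx => hX0 x (hsub hx)) (fun x hx => hX'_le x (hcc ▸ hx)) fun x hx => hF_le x (hcc ▸ hx)
  rw [hsplit]
  refine (abs_add_le _ _).trans ((add_le_add hpart hgraph).trans_eq ?_)
  rw [sub_neg_eq_add, abs_of_nonneg (by linarith)]
  ring

lemma abs_integral_deriv_logPotential_mul_le (hk : IsBoundedDensity k M a) {m : ℝ → ℝ} {B : ℝ}
    (hc : 0 ≤ c) (hca : c ≤ 2 * a) (ha : 0 < a) (hB : 0 ≤ B) (hm : ∀ x ∈ Icc (-c) c, |m x| ≤ B) :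
    |∫ x in -c..c, deriv (logPotential k) x * m x| ≤ 16 * M * a * B := by
  have h_int := (hk.energyBoundOn_logPotential
    ha).absolutelyContinuousOnInterval.intervalIntegrable_deriv.abs.mul_const B
  have hle : ∫ x in -c..c, |deriv (logPotential k) x| * B ≤
      ∫ x in -(2 * a)..2 * a, |deriv (logPotential k) x| * B :=
    intervalIntegral.integral_mono_interval (by linarith) (by linarith) hca
      (ae_of_all _ fun x => mul_nonneg (abs_nonneg (deriv (logPotential k) x)) hB) h_int
  calc |∫ x in -c..c, deriv (logPotential k) x * m x|
      ≤ ∫ x in -c..c, |deriv (logPotential k) x| * B := by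
        rw [← norm_eq_abs]
        refine intervalIntegral.norm_integral_le_of_norm_le (by linarith)
          (ae_of_all _ fun x hx => ?_) (h_int.mono_set ?_)
        · rw [norm_mul]
          exact mul_le_mul_of_nonneg_left (hm x (Ioc_subset_Icc_self hx)) (abs_nonneg _)
        · rw [uIcc_of_le (by linarith), uIcc_of_le (by linarith)]
          exact Icc_subset_Icc (by linarith) hca
    _ ≤ (∫ x in -(2 * a)..2 * a, |deriv (logPotential k) x|) * B := by
        rwa [← intervalIntegral.integral_mul_const]
    _ ≤ 16 * M * a * B := mul_le_mul_of_nonneg_right (hk.integral_abs_deriv_logPotential_le ha) hB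

end IsBoundedDensity

/-! ### Profiles and cutoffs -/

/-- A `C^{1,1}` function on `(-r, r)` with Lipschitz constant `A` for its derivative, vanishing to
first order at `0`. -/
structure IsFlatProfile (A r : ℝ) (f : ℝ → ℝ) : Prop where
  contDiffOn : ContDiffOn ℝ 1 f (Ioo (-r) r)
  abs_deriv_sub_le : ∀ x ∈ Ioo (-r) r, ∀ y ∈ Ioo (-r) r, |deriv f x - deriv f y| ≤ A * |x - y|
  apply_zero : f 0 = 0
  deriv_zero : deriv f 0 = 0

lemma zero_mem_Ioo_neg {x r : ℝ} (hx : x ∈ Ioo (-r) r) : (0 : ℝ) ∈ Ioo (-r) r :=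
  ⟨by linarith [hx.1, hx.2], by linarith [hx.1, hx.2]⟩

namespace IsFlatProfile

variable {A r x y : ℝ} {f : ℝ → ℝ}

lemma hasDerivAt (hf : IsFlatProfile A r f) (hx : x ∈ Ioo (-r) r) : HasDerivAt f (deriv f x) x :=
  (hf.contDiffOn.differentiableOn one_ne_zero).hasDerivAt (isOpen_Ioo.mem_nhds hx)

lemma abs_deriv_le (hf : IsFlatProfile A r f) (hx : x ∈ Ioo (-r) r) : |deriv f x| ≤ A * |x| := by
  simpa [hf.deriv_zero] using hf.abs_deriv_sub_le x hx 0 (zero_mem_Ioo_neg hx)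

lemma abs_sub_sub_le (hf : IsFlatProfile A r f) (hA : 0 ≤ A) (hx : x ∈ Ioo (-r) r)
    (hy : y ∈ Ioo (-r) r) : |f x - f y - deriv f x * (x - y)| ≤ A * (x - y) ^ 2 := by
  have hsub : uIcc x y ⊆ Ioo (-r) r := ordConnected_Ioo.uIcc_subset hx hy
  have hderiv (z : ℝ) (hz : z ∈ uIcc x y) :
      HasDerivWithinAt (fun z => f z - deriv f x * z) (deriv f z - deriv f x) (uIcc x y) z := by
    simpa using ((hf.hasDerivAt (hsub hz)).fun_sub
      ((hasDerivAt_id' z).const_mul (deriv f x))).hasDerivWithinAt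
  have hbound (z : ℝ) (hz : z ∈ uIcc x y) : ‖deriv f z - deriv f x‖ ≤ A * |x - y| :=
    (hf.abs_deriv_sub_le z (hsub hz) x hx).trans <| mul_le_mul_of_nonneg_left
      ((abs_sub_left_of_mem_uIcc hz).trans_eq (abs_sub_comm y x)) hA
  have h := (convex_uIcc x y).norm_image_sub_le_of_norm_hasDerivWithin_le hderiv hbound
    right_mem_uIcc left_mem_uIcc
  rw [norm_eq_abs, norm_eq_abs, mul_assoc, abs_mul_abs_self] at h
  rwa [sq, mul_sub, sub_sub_sub_comm]

lemma abs_sub_le (hf : IsFlatProfile A r f) (hA : 0 ≤ A) (hx : x ∈ Ioo (-r) r)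
    (hy : y ∈ Ioo (-r) r) : |f x - f y| ≤ A * (|x| + |x - y|) * |x - y| :=
  calc |f x - f y| ≤ |deriv f x * (x - y)| + |f x - f y - deriv f x * (x - y)| := by
        simpa using abs_add_le (deriv f x * (x - y)) (f x - f y - deriv f x * (x - y))
    _ ≤ A * |x| * |x - y| + A * (x - y) ^ 2 := by
        rw [abs_mul]
        gcongr
        exacts [hf.abs_deriv_le hx, hf.abs_sub_sub_le hA hx hy]
    _ = A * (|x| + |x - y|) * |x - y| := by rw [← sq_abs (x - y)]; ring

lemma abs_le (hf : IsFlatProfile A r f) (hA : 0 ≤ A) (hx : x ∈ Ioo (-r) r) :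
    |f x| ≤ A * x ^ 2 := by
  have h := hf.abs_sub_le hA (zero_mem_Ioo_neg hx) hx
  rw [hf.apply_zero, abs_zero, zero_add, zero_sub, abs_neg, zero_sub, abs_neg, mul_assoc,
    abs_mul_abs_self] at h
  rwa [sq]

end IsFlatProfile

/-- The hypotheses on two interfaces near their almost contact point: both are flat profiles on
`(-2√ε, 2√ε)`, and after separation by `2 * ε` they stay at distance at least `ε`. -/
structure IsNearContact (A ε : ℝ) (f g : ℝ → ℝ) : Prop where
  left : IsFlatProfile A (2 * √ε) f
  right : IsFlatProfile A (2 * √ε) g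
  neg_le_add : ∀ α ∈ Ioo (-(2 * √ε)) (2 * √ε), ∀ β ∈ Ioo (-(2 * √ε)) (2 * √ε), -ε ≤ f α + g β

namespace IsNearContact

variable {A ε α β : ℝ} {f g : ℝ → ℝ}

protected lemma symm (h : IsNearContact A ε f g) : IsNearContact A ε g f :=
  ⟨h.right, h.left, fun α hα β hβ => add_comm (f β) (g α) ▸ h.neg_le_add β hβ α hα⟩

lemma le_gap (h : IsNearContact A ε f g) (hα : α ∈ Ioo (-(2 * √ε)) (2 * √ε))
    (hβ : β ∈ Ioo (-(2 * √ε)) (2 * √ε)) : ε ≤ 2 * ε + f α + g β := by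
  linarith [h.neg_le_add α hα β hβ]

lemma gap_le (h : IsNearContact A ε f g) (hA : 1 ≤ A) (hε : 0 < ε)
    (hα : α ∈ Ioo (-(2 * √ε)) (2 * √ε)) (hβ : β ∈ Ioo (-(2 * √ε)) (2 * √ε)) :
    2 * ε + f α + g β ≤ 10 * A * ε := by
  have hsq {x : ℝ} (hx : x ∈ Ioo (-(2 * √ε)) (2 * √ε)) : A * x ^ 2 ≤ A * (4 * ε) := by
    have := sq_sqrt hε.le
    gcongr
    nlinarith [hx.1, hx.2]
  nlinarith [(le_abs_self _).trans (h.left.abs_le (by linarith) hα), hsq hα, hsq hβ,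
    (le_abs_self _).trans (h.right.abs_le (by linarith) hβ), mul_le_mul_of_nonneg_right hA hε.le]

lemma contDiffOn_Xt (h : IsNearContact A ε f g) :
    ContDiffOn ℝ 1 (Xt ε f g) (Ioo (-(2 * √ε)) (2 * √ε)) :=
  (contDiffOn_const.add h.left.contDiffOn).add h.right.contDiffOn

lemma abs_deriv_Xt_le (h : IsNearContact A ε f g) (hα : α ∈ Ioo (-(2 * √ε)) (2 * √ε)) :
    |deriv (Xt ε f g) α| ≤ 2 * A * |α| := by
  have hderiv : HasDerivAt (Xt ε f g) (deriv f α + deriv g α) α :=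
    ((h.left.hasDerivAt hα).const_add (2 * ε)).add (h.right.hasDerivAt hα)
  rw [hderiv.deriv]
  linarith [abs_add_le (deriv f α) (deriv g α), h.left.abs_deriv_le hα, h.right.abs_deriv_le hα]

end IsNearContact

lemma Xt_comm (ε : ℝ) (f g : ℝ → ℝ) : Xt ε f g = Xt ε g f :=
  funext fun α => add_right_comm (2 * ε) (f α) (g α)

/-- A `C¹` cutoff with values in `[0, 1]`, equal to `1` on `[-1/2, 1/2]` and to `0` outside
`[-1, 1]`. -/
structure IsC1Cutoff (ψ : ℝ → ℝ) : Prop where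
  contDiff : ContDiff ℝ 1 ψ
  mem_Icc : ∀ x, ψ x ∈ Icc (0 : ℝ) 1
  eq_zero : ∀ x, 1 < |x| → ψ x = 0
  eq_one : ∀ x, |x| ≤ 1 / 2 → ψ x = 1

lemma IsCutoff.isC1Cutoff {ψ : ℝ → ℝ} (hψ : IsCutoff ψ) : IsC1Cutoff ψ :=
  ⟨hψ.1.of_le (by exact_mod_cast le_top), hψ.2.2.1, hψ.2.2.2.1, hψ.2.2.2.2⟩

namespace IsC1Cutoff

variable {ψ : ℝ → ℝ} {r x : ℝ}

lemma contDiff_scut (hψ : IsC1Cutoff ψ) (r : ℝ) : ContDiff ℝ 1 (scut ψ r) :=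
  hψ.contDiff.comp (contDiff_id.div_const r)

lemma scut_eq_zero (hψ : IsC1Cutoff ψ) (hr : 0 < r) (hx : r < |x|) : scut ψ r x = 0 :=
  hψ.eq_zero _ (by rwa [abs_div, abs_of_pos hr, one_lt_div hr])

lemma scut_eq_one (hψ : IsC1Cutoff ψ) (hr : 0 < r) (hx : |x| ≤ r / 2) : scut ψ r x = 1 :=
  hψ.eq_one _ (by rwa [abs_div, abs_of_pos hr, div_le_iff₀ hr, one_div_mul_eq_div])

lemma scut_mem_Icc (hψ : IsC1Cutoff ψ) (r x : ℝ) : scut ψ r x ∈ Icc (0 : ℝ) 1 :=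
  hψ.mem_Icc (x / r)

lemma abs_one_sub_scut_le (hψ : IsC1Cutoff ψ) (r x : ℝ) : |1 - scut ψ r x| ≤ 1 :=
  abs_le.2 ⟨by linarith [(hψ.scut_mem_Icc r x).2], by linarith [(hψ.scut_mem_Icc r x).1]⟩

lemma abs_scut_le (hψ : IsC1Cutoff ψ) (r x : ℝ) : |scut ψ r x| ≤ 1 :=
  abs_le.2 ⟨by linarith [(hψ.scut_mem_Icc r x).1], (hψ.scut_mem_Icc r x).2⟩

lemma exists_abs_deriv_le (hψ : IsC1Cutoff ψ) : ∃ S, 0 ≤ S ∧ ∀ x, |deriv ψ x| ≤ S := by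
  have hsupp : HasCompactSupport ψ :=
    HasCompactSupport.of_support_subset_isCompact (isCompact_Icc (a := -1) (b := 1)) fun x hx =>
      abs_le.1 (not_lt.1 fun h => hx (hψ.eq_zero x h))
  obtain ⟨S, hS⟩ := hsupp.deriv.exists_bound_of_continuous (hψ.contDiff.continuous_deriv le_rfl)
  exact ⟨S, (norm_nonneg _).trans (hS 0), hS⟩

end IsC1Cutoff

/-! ### Kernel estimates -/

lemma abs_cauchyDefect_le {y t : ℝ} (ht : t ≠ 0) : |cauchyDefect y t| ≤ y ^ 2 / |t| ^ 3 := by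
  have : 0 < |t| := abs_pos.2 ht
  rw [cauchyDefect, abs_mul, abs_inv, abs_of_nonneg (by positivity : 0 ≤ y ^ 2 / (t ^ 2 + y ^ 2)),
    ← sq_abs t]
  calc |t|⁻¹ * (y ^ 2 / (|t| ^ 2 + y ^ 2)) ≤ |t|⁻¹ * (y ^ 2 / |t| ^ 2) := by
        gcongr
        linarith [sq_nonneg y]
    _ = y ^ 2 / |t| ^ 3 := by field_simp

lemma abs_cauchyDefect_sub_le {x y t : ℝ} (ht : t ≠ 0) :
    |cauchyDefect x t - cauchyDefect y t| ≤ |x - y| * (|x| + |y|) / |t| ^ 3 := by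
  have : 0 < |t| := abs_pos.2 ht
  have hxy : cauchyDefect x t - cauchyDefect y t =
      (x - y) * (x + y) * t / ((t ^ 2 + x ^ 2) * (t ^ 2 + y ^ 2)) := by
    rw [cauchyDefect, cauchyDefect]
    have : t ^ 2 + x ^ 2 ≠ 0 := by positivity
    have : t ^ 2 + y ^ 2 ≠ 0 := by positivity
    field_simp
    ring
  rw [hxy, abs_div, abs_mul, abs_mul, abs_of_nonneg (by positivity :
    0 ≤ (t ^ 2 + x ^ 2) * (t ^ 2 + y ^ 2)), ← sq_abs t]
  calc |x - y| * |x + y| * |t| / ((|t| ^ 2 + x ^ 2) * (|t| ^ 2 + y ^ 2))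
      ≤ |x - y| * (|x| + |y|) * |t| / (|t| ^ 2 * |t| ^ 2) := by
        gcongr
        · exact abs_add_le x y
        · linarith [sq_nonneg x]
        · linarith [sq_nonneg y]
    _ = |x - y| * (|x| + |y|) / |t| ^ 3 := by field_simp

lemma abs_conjPoisson_sub_le {X Y c t : ℝ} (ht : t ≠ 0) (hc : 0 < c) (hcY : c ≤ Y) :
    |conjPoisson Y t - conjPoisson X t| ≤
      |X - Y| * (|X| + |Y|) / (|t| * (t ^ 2 + c ^ 2)) := by
  have : 0 < |t| := abs_pos.2 ht
  have hY : 0 < Y := hc.trans_le hcY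
  have hXY : conjPoisson Y t - conjPoisson X t =
      (X - Y) * (X + Y) * t / ((t ^ 2 + X ^ 2) * (t ^ 2 + Y ^ 2)) := by
    rw [conjPoisson, conjPoisson]
    have : t ^ 2 + X ^ 2 ≠ 0 := by positivity
    field_simp
    ring
  rw [hXY, abs_div, abs_mul, abs_mul, abs_of_nonneg (by positivity :
    0 ≤ (t ^ 2 + X ^ 2) * (t ^ 2 + Y ^ 2)), ← sq_abs t]
  calc |X - Y| * |X + Y| * |t| / ((|t| ^ 2 + X ^ 2) * (|t| ^ 2 + Y ^ 2))
      ≤ |X - Y| * (|X| + |Y|) * |t| / (|t| ^ 2 * (|t| ^ 2 + c ^ 2)) := by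
        gcongr
        · exact abs_add_le X Y
        · linarith [sq_nonneg X]
    _ = |X - Y| * (|X| + |Y|) / (|t| * (|t| ^ 2 + c ^ 2)) := by field_simp

lemma cauchyDefect_mul_self {t : ℝ} (ht : t ≠ 0) (p : ℝ) :
    cauchyDefect (p * t) t = p ^ 2 / (1 + p ^ 2) * t⁻¹ := by
  rw [cauchyDefect]
  field_simp

lemma sq_div_sqrt_div_cube_le {A ε n y : ℝ} (hε : 0 < ε) (hn : 0 < n) (hy : |y| ≤ 10 * A * ε) :
    y ^ 2 / (√ε / n) ^ 3 ≤ 100 * n ^ 3 * A ^ 2 * √ε := by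
  have : 0 < √ε := sqrt_pos.2 hε
  have hy2 : y ^ 2 ≤ (10 * A * √ε ^ 2) ^ 2 := by
    rw [sq_sqrt hε.le, ← sq_abs]
    gcongr
  calc y ^ 2 / (√ε / n) ^ 3 ≤ (10 * A * √ε ^ 2) ^ 2 / (√ε / n) ^ 3 := by gcongr
    _ = 100 * n ^ 3 * A ^ 2 * √ε := by field_simp; ring

namespace IsC1Cutoff

variable {ψ : ℝ → ℝ} {r t : ℝ}

lemma abs_one_sub_scut_mul_cauchyDefect_le (hψ : IsC1Cutoff ψ) (hr : 0 < r) (y t : ℝ) :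
    |(1 - scut ψ r t) * cauchyDefect y t| ≤ y ^ 2 / (r / 2) ^ 3 := by
  rcases le_or_gt |t| (r / 2) with ht | ht
  · rw [hψ.scut_eq_one hr ht, sub_self, zero_mul, abs_zero]
    positivity
  · have ht0 : t ≠ 0 := abs_pos.1 (by linarith)
    rw [abs_mul]
    calc |1 - scut ψ r t| * |cauchyDefect y t| ≤ 1 * (y ^ 2 / |t| ^ 3) :=
          mul_le_mul (hψ.abs_one_sub_scut_le r t) (abs_cauchyDefect_le ht0) (abs_nonneg _)
            zero_le_one
      _ ≤ y ^ 2 / (r / 2) ^ 3 := by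
          rw [one_mul]
          gcongr

lemma abs_one_sub_scut_mul_conjPoisson_le (hψ : IsC1Cutoff ψ) (hr : 0 < r) (y t : ℝ) :
    |(1 - scut ψ r t) * conjPoisson y t| ≤ (r / 2)⁻¹ := by
  rcases le_or_gt |t| (r / 2) with ht | ht
  · rw [hψ.scut_eq_one hr ht, sub_self, zero_mul, abs_zero]
    positivity
  · have ht0 : 0 < |t| := by linarith
    rw [abs_mul]
    calc |1 - scut ψ r t| * |conjPoisson y t| ≤ 1 * |t|⁻¹ := by
          refine mul_le_mul (hψ.abs_one_sub_scut_le r t) ?_ (abs_nonneg _) zero_le_one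
          rw [conjPoisson, abs_div, abs_of_nonneg (by positivity : 0 ≤ t ^ 2 + y ^ 2), ← sq_abs t,
            div_le_iff₀ (by positivity)]
          field_simp
          linarith [sq_nonneg y]
      _ ≤ (r / 2)⁻¹ := by
          rw [one_mul]
          gcongr

end IsC1Cutoff

lemma Hker_eq (ψ : ℝ → ℝ) (ε : ℝ) (f g : ℝ → ℝ) (α β : ℝ) :
    Hker ψ ε f g α β = cauchyDefect (Xt ε f g α) (α - β) * scut ψ (√ε / 2 ^ 6) α *
      scut ψ (√ε / 2 ^ 6) (α - β) :=
  rfl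

/-- The kernel left over when the kernel of `2π (H + T_{4,(g,f)} - T_{2,f})` is compared with its
model, which is built from the values of `f`, `f'` and `Xt` at `α` only. -/
def comparisonRemainder (ψ : ℝ → ℝ) (ε : ℝ) (f g : ℝ → ℝ) (α β : ℝ) : ℝ :=
  Hker ψ ε f g α β +
      scut ψ √ε (α - β) * (conjPoisson (2 * ε + g α + f β) (α - β) -
        conjPoisson (f α - f β) (α - β)) -
    (scut ψ (√ε / 2 ^ 6) α - 1) * cauchyDefect (Xt ε f g α) (α - β) -
    cauchyDefect (deriv f α * (α - β)) (α - β)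

lemma comparisonRemainder_eq {ψ f g : ℝ → ℝ} {ε α β : ℝ} (hne : α ≠ β) :
    comparisonRemainder ψ ε f g α β =
      (1 - scut ψ √ε (α - β)) * cauchyDefect (Xt ε f g α) (α - β) -
        scut ψ (√ε / 2 ^ 6) α *
          ((1 - scut ψ (√ε / 2 ^ 6) (α - β)) * cauchyDefect (Xt ε f g α) (α - β)) +
        scut ψ √ε (α - β) *
          (conjPoisson (2 * ε + g α + f β) (α - β) - conjPoisson (Xt ε f g α) (α - β)) +
        (cauchyDefect (f α - f β) (α - β) - cauchyDefect (deriv f α * (α - β)) (α - β)) -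
        (1 - scut ψ √ε (α - β)) * cauchyDefect (f α - f β) (α - β) := by
  have hX := conjPoisson_add_cauchyDefect (sub_ne_zero.2 hne) (Xt ε f g α)
  have hD := conjPoisson_add_cauchyDefect (sub_ne_zero.2 hne) (f α - f β)
  rw [comparisonRemainder, Hker_eq]
  linear_combination scut ψ √ε (α - β) * (hX - hD)

namespace IsNearContact

variable {A ε α β : ℝ} {f g ψ : ℝ → ℝ}

lemma abs_cauchyDefect_sub_tangent_le (h : IsNearContact A ε f g) (hA : 0 ≤ A)
    (hα : α ∈ Ioo (-√ε) √ε) (hβ : β ∈ Ioo (-(2 * √ε)) (2 * √ε)) (hne : α ≠ β) :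
    |cauchyDefect (f α - f β) (α - β) - cauchyDefect (deriv f α * (α - β)) (α - β)| ≤
      5 * A ^ 2 * √ε := by
  have hα' : α ∈ Ioo (-(2 * √ε)) (2 * √ε) := ⟨by linarith [hα.1, hα.2], by linarith [hα.1, hα.2]⟩
  set t := α - β
  have ht0 : t ≠ 0 := sub_ne_zero.2 hne
  have : 0 < |t| := abs_pos.2 ht0
  have hα1 : |α| ≤ √ε := (abs_lt.2 hα).le
  have ht3 : |t| ≤ 3 * √ε := abs_le.2 ⟨by linarith [hα.1, hβ.2], by linarith [hα.2, hβ.1]⟩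
  have hsum : |f α - f β| + |deriv f α * t| ≤ 5 * A * √ε * |t| := by
    rw [abs_mul]
    calc |f α - f β| + |deriv f α| * |t| ≤ A * (|α| + |t|) * |t| + A * |α| * |t| := by
          gcongr
          exacts [h.left.abs_sub_le hA hα' hβ, h.left.abs_deriv_le hα']
      _ = A * (2 * |α| + |t|) * |t| := by ring
      _ ≤ A * (5 * √ε) * |t| := by gcongr; linarith
      _ = 5 * A * √ε * |t| := by ring
  calc _ ≤ |f α - f β - deriv f α * t| * (|f α - f β| + |deriv f α * t|) / |t| ^ 3 :=
        abs_cauchyDefect_sub_le ht0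
    _ ≤ A * |t| ^ 2 * (5 * A * √ε * |t|) / |t| ^ 3 := by
        gcongr
        rw [sq_abs]
        exact h.left.abs_sub_sub_le hA hα' hβ
    _ = 5 * A ^ 2 * √ε := by field_simp

lemma abs_conjPoisson_gap_sub_le (h : IsNearContact A ε f g) (hA : 1 ≤ A) (hε : 0 < ε)
    (hα : α ∈ Ioo (-(2 * √ε)) (2 * √ε)) (hβ : β ∈ Ioo (-(2 * √ε)) (2 * √ε)) (hne : α ≠ β) :
    |conjPoisson (2 * ε + g α + f β) (α - β) - conjPoisson (Xt ε f g α) (α - β)| ≤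
      20 * A ^ 2 * ((|α| + |α - β|) * halfPlanePoisson ε (α - β)) := by
  set t := α - β
  have ht0 : t ≠ 0 := sub_ne_zero.2 hne
  have : 0 < |t| := abs_pos.2 ht0
  have hY := h.symm.le_gap hα hβ
  have hX : ε ≤ Xt ε f g α := h.le_gap hα hα
  have hsum : |Xt ε f g α| + |2 * ε + g α + f β| ≤ 20 * A * ε := by
    rw [abs_of_pos (hε.trans_le hX), abs_of_pos (hε.trans_le hY)]
    linarith [h.symm.gap_le hA hε hα hβ, show Xt ε f g α ≤ _ from h.gap_le hA hε hα hα]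
  have hdiff : |Xt ε f g α - (2 * ε + g α + f β)| ≤ A * (|α| + |t|) * |t| := by
    rw [Xt, add_right_comm, add_sub_add_left_eq_sub]
    exact h.left.abs_sub_le (by linarith) hα hβ
  calc _ ≤ |Xt ε f g α - (2 * ε + g α + f β)| * (|Xt ε f g α| + |2 * ε + g α + f β|) /
          (|t| * (t ^ 2 + ε ^ 2)) := abs_conjPoisson_sub_le ht0 hε hY
    _ ≤ A * (|α| + |t|) * |t| * (20 * A * ε) / (|t| * (t ^ 2 + ε ^ 2)) := by gcongr
    _ = 20 * A ^ 2 * ((|α| + |t|) * halfPlanePoisson ε t) := by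
        rw [halfPlanePoisson]
        field_simp

lemma abs_sub_le (h : IsNearContact A ε f g) (hA : 0 ≤ A) (hε : 0 ≤ ε)
    (hα : α ∈ Ioo (-√ε) √ε) (hβ : β ∈ Ioo (-(2 * √ε)) (2 * √ε)) : |f α - f β| ≤ 10 * A * ε := by
  have hα' : |α| ^ 2 ≤ ε := by
    rw [← sq_sqrt hε]
    have := (abs_lt.2 hα).le
    gcongr
  have hβ' : |β| ^ 2 ≤ 4 * ε := by
    calc |β| ^ 2 ≤ (2 * √ε) ^ 2 := by
          have := (abs_lt.2 hβ).le
          gcongr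
      _ = 4 * ε := by rw [mul_pow, sq_sqrt hε]; norm_num
  rw [sq_abs] at hα' hβ'
  calc |f α - f β| ≤ |f α| + |f β| := abs_sub _ _
    _ ≤ A * α ^ 2 + A * β ^ 2 :=
        add_le_add (h.left.abs_le hA (Ioo_subset_Ioo (by linarith [sqrt_nonneg ε])
          (by linarith [sqrt_nonneg ε]) hα)) (h.left.abs_le hA hβ)
    _ ≤ A * ε + A * (4 * ε) := by gcongr
    _ ≤ 10 * A * ε := by nlinarith [mul_nonneg hA hε]

lemma abs_comparisonRemainder_le (h : IsNearContact A ε f g) (hψ : IsC1Cutoff ψ) (hA : 1 ≤ A)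
    (hε : 0 < ε) (hα : α ∈ Ioo (-√ε) √ε) (hβ : β ∈ Ioo (-(2 * √ε)) (2 * √ε)) (hne : α ≠ β) :
    |comparisonRemainder ψ ε f g α β| ≤ 3 * 10 ^ 8 * A ^ 2 * √ε +
      20 * A ^ 2 * ((|α| + |α - β|) * halfPlanePoisson ε (α - β)) := by
  have hα' : α ∈ Ioo (-(2 * √ε)) (2 * √ε) := ⟨by linarith [hα.1, hα.2], by linarith [hα.1, hα.2]⟩
  have hX : |Xt ε f g α| ≤ 10 * A * ε :=
    (abs_of_pos (hε.trans_le (h.le_gap hα' hα'))).trans_le (h.gap_le hA hε hα' hα')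
  have hρ : 0 < √ε := sqrt_pos.2 hε
  have hbig {y : ℝ} (hy : |y| ≤ 10 * A * ε) :
      |(1 - scut ψ √ε (α - β)) * cauchyDefect y (α - β)| ≤ 800 * A ^ 2 * √ε :=
    (hψ.abs_one_sub_scut_mul_cauchyDefect_le hρ y _).trans <|
      (sq_div_sqrt_div_cube_le hε two_pos hy).trans_eq (by ring)
  have hsmall : |scut ψ (√ε / 2 ^ 6) α *
      ((1 - scut ψ (√ε / 2 ^ 6) (α - β)) * cauchyDefect (Xt ε f g α) (α - β))| ≤
        209715200 * A ^ 2 * √ε := by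
    rw [abs_mul]
    refine (mul_le_of_le_one_left (abs_nonneg _) (hψ.abs_scut_le _ _)).trans <|
      (hψ.abs_one_sub_scut_mul_cauchyDefect_le (by positivity) _ _).trans ?_
    rw [div_div]
    exact (sq_div_sqrt_div_cube_le hε (by norm_num) hX).trans_eq (by ring)
  have hgap : |scut ψ √ε (α - β) *
      (conjPoisson (2 * ε + g α + f β) (α - β) - conjPoisson (Xt ε f g α) (α - β))| ≤
        20 * A ^ 2 * ((|α| + |α - β|) * halfPlanePoisson ε (α - β)) := by
    rw [abs_mul]
    exact (mul_le_of_le_one_left (abs_nonneg _) (hψ.abs_scut_le _ _)).trans <|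
      h.abs_conjPoisson_gap_sub_le hA hε hα' hβ hne
  have hA0 : 0 ≤ A := zero_le_one.trans hA
  have hflat := h.abs_cauchyDefect_sub_tangent_le hA0 hα hβ hne
  have hXfar := hbig hX
  have hDfar := hbig (h.abs_sub_le hA0 hε.le hα hβ)
  have hpos : 0 ≤ A ^ 2 * √ε := by positivity
  rw [comparisonRemainder_eq hne]
  rw [abs_le] at *
  constructor <;> linarith

end IsNearContact

/-! ### The operators up to small kernels -/

lemma aecover_lt_abs_sub (α : ℝ) :
    AECover volume (𝓝[>] (0 : ℝ)) fun r => {β : ℝ | r < |α - β|} where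
  ae_eventually_mem := by
    filter_upwards [Measure.ae_ne volume α] with β hβ
    filter_upwards [Ioo_mem_nhdsGT (abs_pos.2 (sub_ne_zero.2 hβ.symm))] with r hr using hr.2
  measurableSet r := measurableSet_lt measurable_const (by fun_prop)

lemma pvI_eq_of_tendsto {F K R : ℝ → ℝ} {α L : ℝ} (hF : ∀ β, α ≠ β → F β = K β + R β)
    (hK : ∀ r > 0, IntegrableOn K {β | r < |α - β|})
    (hL : Tendsto (fun r => ∫ β in {β | r < |α - β|}, K β) (𝓝[>] 0) (𝓝 L)) (hR : Integrable R) :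
    pvI F α = L + ∫ β, R β := by
  refine Tendsto.limUnder_eq <| (hL.add <|
    (aecover_lt_abs_sub α).integral_tendsto_of_countably_generated hR).congr' ?_
  filter_upwards [self_mem_nhdsWithin] with r hr
  rw [← integral_add (hK r hr) hR.integrableOn]
  refine setIntegral_congr_fun (measurableSet_lt measurable_const (by fun_prop)) fun β hβ => ?_
  exact (hF β (sub_ne_zero.1 (abs_pos.1 (hr.trans hβ)))).symm

namespace IsBoundedDensity

variable {k : ℝ → ℝ} {M a : ℝ}

lemma integrableOn_mul_inv (hk : IsBoundedDensity k M a) (α : ℝ) {r : ℝ} (hr : 0 < r) :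
    IntegrableOn (fun β => k β * (α - β)⁻¹) {β | r < |α - β|} := by
  refine (hk.integrable_mul_truncated_inv α hr).integrableOn.congr_fun (fun β hβ => ?_)
    (measurableSet_lt measurable_const (by fun_prop))
  simp only [if_pos (mem_ofPred.1 hβ)]

lemma integrable_mul_of_abs_le (hk : IsBoundedDensity k M a) {K : ℝ → ℝ} {α B : ℝ}
    (hK : AEMeasurable K (volume.restrict (Ioo (-a) a)))
    (hB : ∀ β ∈ Ioo (-a) a, α ≠ β → |K β| ≤ B) : Integrable fun β => k β * K β := by
  refine hk.integrable_smul (K := K) <| IntegrableOn.of_bound (C := B) measure_Ioo_lt_top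
    hK.aestronglyMeasurable ?_
  filter_upwards [ae_restrict_mem measurableSet_Ioo, ae_restrict_of_ae (Measure.ae_ne volume α)]
    with β hβ hne using hB β hβ hne.symm

lemma pvI_mul_eq (hk : IsBoundedDensity k M a) {K : ℝ → ℝ} {α G : ℝ}
    (hG : Tendsto (fun r => ∫ β in {β | r < |α - β|}, k β * (α - β)⁻¹) (𝓝[>] 0) (𝓝 G)) {c : ℝ}
    (hR : Integrable fun β => k β * (K β - c * (α - β)⁻¹)) :
    pvI (fun β => k β * K β) α = c * G + ∫ β, k β * (K β - c * (α - β)⁻¹) := by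
  refine pvI_eq_of_tendsto (K := fun β => c * (k β * (α - β)⁻¹)) (fun β _ => by ring)
    (fun r hr => (hk.integrableOn_mul_inv α hr).const_mul c) ?_ hR
  simpa only [integral_const_mul] using hG.const_mul c

end IsBoundedDensity

lemma Hker_sub_eq {ψ f g : ℝ → ℝ} {ε α β : ℝ} (hne : α ≠ β) :
    Hker ψ ε f g α β - scut ψ (√ε / 2 ^ 6) α * (α - β)⁻¹ =
      -(scut ψ (√ε / 2 ^ 6) α * (conjPoisson (Xt ε f g α) (α - β) +
        (1 - scut ψ (√ε / 2 ^ 6) (α - β)) * cauchyDefect (Xt ε f g α) (α - β))) := by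
  have hX := conjPoisson_add_cauchyDefect (sub_ne_zero.2 hne) (Xt ε f g α)
  rw [Hker_eq]
  linear_combination scut ψ (√ε / 2 ^ 6) α * hX

lemma scut_mul_conjPoisson_sub_eq {ψ f : ℝ → ℝ} {r α β : ℝ} (hne : α ≠ β) :
    scut ψ r (α - β) * conjPoisson (f α - f β) (α - β) -
        (1 - deriv f α ^ 2 / (1 + deriv f α ^ 2)) * (α - β)⁻¹ =
      -((1 - scut ψ r (α - β)) * conjPoisson (f α - f β) (α - β) +
        (cauchyDefect (f α - f β) (α - β) - cauchyDefect (deriv f α * (α - β)) (α - β))) := by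
  have hD := conjPoisson_add_cauchyDefect (sub_ne_zero.2 hne) (f α - f β)
  rw [cauchyDefect_mul_self (sub_ne_zero.2 hne)]
  linear_combination hD

lemma T4_eq (ψ : ℝ → ℝ) (ε : ℝ) (f g k : ℝ → ℝ) (α : ℝ) :
    T4 ψ ε g f k α = (2 * π)⁻¹ *
      ∫ β, k β * (scut ψ √ε (α - β) * conjPoisson (2 * ε + g α + f β) (α - β)) := by
  rw [T4]
  simp only [conjPoisson, mul_comm, mul_assoc]

lemma comparisonRemainder_eq_add {ψ f g : ℝ → ℝ} {ε α β : ℝ} (hne : α ≠ β) :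
    comparisonRemainder ψ ε f g α β =
      Hker ψ ε f g α β - scut ψ (√ε / 2 ^ 6) α * (α - β)⁻¹ +
        scut ψ √ε (α - β) * conjPoisson (2 * ε + g α + f β) (α - β) -
        (scut ψ √ε (α - β) * conjPoisson (f α - f β) (α - β) -
          (1 - deriv f α ^ 2 / (1 + deriv f α ^ 2)) * (α - β)⁻¹) +
        (scut ψ (√ε / 2 ^ 6) α - 1) * conjPoisson (Xt ε f g α) (α - β) := by
  have hX := conjPoisson_add_cauchyDefect (sub_ne_zero.2 hne) (Xt ε f g α)
  rw [comparisonRemainder, cauchyDefect_mul_self (sub_ne_zero.2 hne)]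
  linear_combination (1 - scut ψ (√ε / 2 ^ 6) α) * hX

namespace IsNearContact

variable {A ε α β M G : ℝ} {f g ψ k : ℝ → ℝ}

lemma aemeasurable_left (h : IsNearContact A ε f g) :
    AEMeasurable f (volume.restrict (Ioo (-(2 * √ε)) (2 * √ε))) :=
  h.left.contDiffOn.continuousOn.aemeasurable measurableSet_Ioo

lemma Xt_pos (h : IsNearContact A ε f g) (hε : 0 < ε) (hα : α ∈ Ioo (-(2 * √ε)) (2 * √ε)) :
    0 < Xt ε f g α :=
  hε.trans_le (h.le_gap hα hα)

lemma integrable_Hker_remainder (h : IsNearContact A ε f g) (hψ : IsC1Cutoff ψ) (hε : 0 < ε)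
    (hk : IsBoundedDensity k M (2 * √ε)) (hα : α ∈ Ioo (-(2 * √ε)) (2 * √ε)) :
    Integrable fun β =>
      k β * (Hker ψ ε f g α β - scut ψ (√ε / 2 ^ 6) α * (α - β)⁻¹) := by
  have hX := h.Xt_pos hε hα
  have hρ : 0 < √ε / 2 ^ 6 := by positivity
  have hψm : Measurable (scut ψ (√ε / 2 ^ 6)) := (hψ.contDiff_scut _).continuous.measurable
  refine hk.integrable_mul_of_abs_le (α := α)
    (B := (Xt ε f g α)⁻¹ + Xt ε f g α ^ 2 / (√ε / 2 ^ 6 / 2) ^ 3) ?_ fun β _ hne => ?_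
  · unfold Hker
    fun_prop
  · rw [Hker_sub_eq hne, abs_neg, abs_mul]
    exact (mul_le_of_le_one_left (abs_nonneg _) (hψ.abs_scut_le _ _)).trans <|
      (abs_add_le _ _).trans <| add_le_add (abs_conjPoisson_le hX _)
        (hψ.abs_one_sub_scut_mul_cauchyDefect_le hρ _ _)

lemma integrable_scut_mul_conjPoisson_remainder (h : IsNearContact A ε f g) (hψ : IsC1Cutoff ψ)
    (hA : 0 ≤ A) (hε : 0 < ε) (hk : IsBoundedDensity k M (2 * √ε)) (hα : α ∈ Ioo (-√ε) √ε) :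
    Integrable fun β => k β * (scut ψ √ε (α - β) * conjPoisson (f α - f β) (α - β) -
      (1 - deriv f α ^ 2 / (1 + deriv f α ^ 2)) * (α - β)⁻¹) := by
  have hψm : Measurable (scut ψ √ε) := (hψ.contDiff_scut _).continuous.measurable
  have hf := h.aemeasurable_left
  refine hk.integrable_mul_of_abs_le (α := α) (B := (√ε / 2)⁻¹ + 5 * A ^ 2 * √ε) ?_
    fun β hβ hne => ?_
  · unfold conjPoisson
    fun_prop
  · rw [scut_mul_conjPoisson_sub_eq hne, abs_neg]
    exact (abs_add_le _ _).trans <| add_le_add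
      (hψ.abs_one_sub_scut_mul_conjPoisson_le (sqrt_pos.2 hε) _ _)
      (h.abs_cauchyDefect_sub_tangent_le hA hα hβ hne)

lemma integrable_scut_mul_conjPoisson_gap (h : IsNearContact A ε f g) (hψ : IsC1Cutoff ψ)
    (hε : 0 < ε) (hk : IsBoundedDensity k M (2 * √ε)) (hα : α ∈ Ioo (-(2 * √ε)) (2 * √ε)) :
    Integrable fun β =>
      k β * (scut ψ √ε (α - β) * conjPoisson (2 * ε + g α + f β) (α - β)) := by
  have hψm : Measurable (scut ψ √ε) := (hψ.contDiff_scut _).continuous.measurable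
  have hf := h.aemeasurable_left
  refine hk.integrable_mul_of_abs_le (α := α) (B := ε⁻¹) ?_ fun β hβ _ => ?_
  · unfold conjPoisson
    fun_prop
  · have hY := h.symm.le_gap hα hβ
    rw [abs_mul]
    exact (mul_le_of_le_one_left (abs_nonneg _) (hψ.abs_scut_le _ _)).trans <|
      (abs_conjPoisson_le (hε.trans_le hY) _).trans (inv_anti₀ hε hY)

lemma Hop_eq (h : IsNearContact A ε f g) (hψ : IsC1Cutoff ψ) (hε : 0 < ε)
    (hk : IsBoundedDensity k M (2 * √ε)) (hα : α ∈ Ioo (-(2 * √ε)) (2 * √ε))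
    (hG : Tendsto (fun r => ∫ β in {β | r < |α - β|}, k β * (α - β)⁻¹) (𝓝[>] 0) (𝓝 G)) :
    Hop ψ ε f g k α = (2 * π)⁻¹ * (scut ψ (√ε / 2 ^ 6) α * G +
      ∫ β, k β * (Hker ψ ε f g α β - scut ψ (√ε / 2 ^ 6) α * (α - β)⁻¹)) := by
  rw [← hk.pvI_mul_eq hG (h.integrable_Hker_remainder hψ hε hk hα), Hop]
  simp only [mul_comm]

lemma T2_eq (h : IsNearContact A ε f g) (hψ : IsC1Cutoff ψ) (hA : 0 ≤ A) (hε : 0 < ε)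
    (hk : IsBoundedDensity k M (2 * √ε)) (hα : α ∈ Ioo (-√ε) √ε)
    (hG : Tendsto (fun r => ∫ β in {β | r < |α - β|}, k β * (α - β)⁻¹) (𝓝[>] 0) (𝓝 G)) :
    T2 ψ ε f k α = (2 * π)⁻¹ * ((1 - deriv f α ^ 2 / (1 + deriv f α ^ 2)) * G +
      ∫ β, k β * (scut ψ √ε (α - β) * conjPoisson (f α - f β) (α - β) -
        (1 - deriv f α ^ 2 / (1 + deriv f α ^ 2)) * (α - β)⁻¹)) := by
  rw [← hk.pvI_mul_eq hG (h.integrable_scut_mul_conjPoisson_remainder hψ hA hε hk hα), T2]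
  simp only [conjPoisson, mul_comm, mul_assoc]

lemma Hop_add_T4_sub_T2_eq (h : IsNearContact A ε f g) (hψ : IsC1Cutoff ψ) (hA : 0 ≤ A)
    (hε : 0 < ε) (hk : IsBoundedDensity k M (2 * √ε)) (hα : α ∈ Ioo (-√ε) √ε)
    (hG : Tendsto (fun r => ∫ β in {β | r < |α - β|}, k β * (α - β)⁻¹) (𝓝[>] 0) (𝓝 G)) :
    Hop ψ ε f g k α + T4 ψ ε g f k α - T2 ψ ε f k α = (2 * π)⁻¹ *
      ((scut ψ (√ε / 2 ^ 6) α - 1) * (G - conjPoissonIntegral k (Xt ε f g α) α) +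
        deriv f α ^ 2 / (1 + deriv f α ^ 2) * G +
        ∫ β, k β * comparisonRemainder ψ ε f g α β) := by
  have hα' : α ∈ Ioo (-(2 * √ε)) (2 * √ε) := ⟨by linarith [hα.1, hα.2], by linarith [hα.1, hα.2]⟩
  have hH := h.integrable_Hker_remainder hψ hε hk hα'
  have hT2 := h.integrable_scut_mul_conjPoisson_remainder hψ hA hε hk hα
  have hT4 := h.integrable_scut_mul_conjPoisson_gap hψ hε hk hα'
  have hQ := (hk.integrable_mul_comp_sub
    (continuous_conjPoisson (h.Xt_pos hε hα')).locallyIntegrable α).const_mul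
      (scut ψ (√ε / 2 ^ 6) α - 1)
  have hsum := integral_add ((hH.add hT4).sub hT2) hQ
  rw [integral_sub' (hH.add hT4) hT2, integral_add' hH hT4, integral_const_mul] at hsum
  rw [h.Hop_eq hψ hε hk hα' hG, h.T2_eq hψ hA hε hk hα hG, T4_eq, conjPoissonIntegral]
  refine Eq.trans (by ring) (congrArg (fun I => (2 * π)⁻¹ * (_ + I)) (hsum.symm.trans
    (integral_congr_ae ?_)))
  filter_upwards [Measure.ae_ne volume α] with β hβ
  rw [comparisonRemainder_eq_add hβ.symm]
  simp only [Pi.add_apply, Pi.sub_apply]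
  ring

end IsNearContact

/-! ### Size of the remainder -/

lemma IsBoundedDensity.abs_integral_mul_le_of_abs_le {k K g : ℝ → ℝ} {M a α : ℝ}
    (hk : IsBoundedDensity k M a) (ha : 0 ≤ a) (hg : IntervalIntegrable g volume (-a) a)
    (hKg : ∀ β ∈ Ioo (-a) a, α ≠ β → |K β| ≤ g β) :
    |∫ β, k β * K β| ≤ M * ∫ β in -a..a, g β := by
  have hsupp : ∫ β, k β * K β = ∫ β in Ioo (-a) a, k β * K β :=
    (setIntegral_eq_integral_of_forall_compl_eq_zero fun β hβ => by
      rw [hk.eq_zero_of_notMem β hβ, zero_mul]).symm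
  rw [hsupp, intervalIntegral.integral_of_le (by linarith), integral_Ioc_eq_integral_Ioo,
    ← integral_const_mul, ← norm_eq_abs]
  refine norm_integral_le_of_norm_le
    (((intervalIntegrable_iff_integrableOn_Ioo_of_le (by linarith)).1 hg).const_mul M) ?_
  filter_upwards [ae_restrict_mem measurableSet_Ioo, ae_restrict_of_ae (Measure.ae_ne volume α)]
    with β hβ hne
  rw [norm_mul]
  exact mul_le_mul (hk.abs_le β) (hKg β hβ hne.symm) (abs_nonneg _) hk.bound_nonneg

lemma intervalIntegral_halfPlanePoisson_le {ε a b : ℝ} (hε : 0 < ε) (hab : a ≤ b) :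
    ∫ t in a..b, halfPlanePoisson ε t ≤ π := by
  rw [intervalIntegral.integral_of_le hab, ← integral_halfPlanePoisson hε]
  exact setIntegral_le_integral (integrable_halfPlanePoisson hε)
    (ae_of_all _ (halfPlanePoisson_nonneg hε.le))

lemma integral_abs_sub_mul_halfPlanePoisson_le {ε x : ℝ} (hε : ε ∈ Ioc (0 : ℝ) (1 / 10))
    (hx : x ∈ Ioo (-√ε) √ε) :
    ∫ β in -(2 * √ε)..2 * √ε, |x - β| * halfPlanePoisson ε (x - β) ≤ 2 * ε * log (1 / ε) := by
  have hcont : Continuous fun t => |t| * halfPlanePoisson ε t :=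
    continuous_abs.mul (continuous_halfPlanePoisson hε.1)
  have hρ := sqrt_nonneg ε
  rw [intervalIntegral.integral_comp_sub_left fun t => |t| * halfPlanePoisson ε t]
  calc _ ≤ ∫ t in -(3 * √ε)..3 * √ε, |t| * halfPlanePoisson ε t :=
        intervalIntegral.integral_mono_interval (by linarith [hx.1]) (by linarith)
          (by linarith [hx.2])
          (ae_of_all _ fun t => mul_nonneg (abs_nonneg t) (halfPlanePoisson_nonneg hε.1.le t))
          (hcont.intervalIntegrable _ _)
    _ ≤ 2 * ε * log (1 / ε) := integral_abs_mul_halfPlanePoisson_le hε (by positivity)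
          (by rw [mul_pow, sq_sqrt hε.1.le]; norm_num)

lemma integral_add_abs_sub_mul_halfPlanePoisson_le {ε x : ℝ} (hε : ε ∈ Ioc (0 : ℝ) (1 / 10))
    (hx : x ∈ Ioo (-√ε) √ε) :
    ∫ β in -(2 * √ε)..2 * √ε, (|x| + |x - β|) * halfPlanePoisson ε (x - β) ≤
      |x| * π + 2 * ε * log (1 / ε) := by
  have hP : Continuous fun β => halfPlanePoisson ε (x - β) :=
    (continuous_halfPlanePoisson hε.1).comp (continuous_const.sub continuous_id)
  have hP1 : Continuous fun β => |x - β| * halfPlanePoisson ε (x - β) :=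
    (continuous_const.sub continuous_id).abs.mul hP
  simp only [add_mul]
  rw [intervalIntegral.integral_add ((hP.const_mul |x|).intervalIntegrable _ _)
    (hP1.intervalIntegrable _ _),
    intervalIntegral.integral_const_mul, intervalIntegral.integral_comp_sub_left]
  exact add_le_add (mul_le_mul_of_nonneg_left
    (intervalIntegral_halfPlanePoisson_le hε.1 (by linarith [sqrt_nonneg ε])) (abs_nonneg x))
    (integral_abs_sub_mul_halfPlanePoisson_le hε hx)

namespace IsNearContact

variable {A ε α M : ℝ} {f g ψ k : ℝ → ℝ}

lemma abs_integral_comparisonRemainder_le (h : IsNearContact A ε f g) (hψ : IsC1Cutoff ψ)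
    (hA : 1 ≤ A) (hε : ε ∈ Ioc (0 : ℝ) (1 / 10)) (hk : IsBoundedDensity k M (2 * √ε))
    (hα : α ∈ Ioo (-√ε) √ε) :
    |∫ β, k β * comparisonRemainder ψ ε f g α β| ≤
      M * A ^ 2 * (12 * 10 ^ 8 * ε + 20 * π * |α| + 40 * (ε * log (1 / ε))) := by
  have hcont : Continuous fun β => (|α| + |α - β|) * halfPlanePoisson ε (α - β) :=
    (continuous_const.add (continuous_const.sub continuous_id).abs).mul <|
      (continuous_halfPlanePoisson hε.1).comp (continuous_const.sub continuous_id)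
  have hsplit : ∫ β in -(2 * √ε)..2 * √ε, (3 * 10 ^ 8 * A ^ 2 * √ε +
      20 * A ^ 2 * ((|α| + |α - β|) * halfPlanePoisson ε (α - β))) =
        12 * 10 ^ 8 * A ^ 2 * ε + 20 * A ^ 2 *
          ∫ β in -(2 * √ε)..2 * √ε, (|α| + |α - β|) * halfPlanePoisson ε (α - β) := by
    rw [intervalIntegral.integral_add intervalIntegrable_const
      ((hcont.const_mul _).intervalIntegrable _ _), intervalIntegral.integral_const,
      intervalIntegral.integral_const_mul, smul_eq_mul]
    linear_combination 12 * 10 ^ 8 * A ^ 2 * sq_sqrt hε.1.le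
  calc _ ≤ M * ∫ β in -(2 * √ε)..2 * √ε, (3 * 10 ^ 8 * A ^ 2 * √ε +
        20 * A ^ 2 * ((|α| + |α - β|) * halfPlanePoisson ε (α - β))) :=
        hk.abs_integral_mul_le_of_abs_le (by positivity)
          ((continuous_const.add (hcont.const_mul _)).intervalIntegrable _ _)
          fun β hβ hne => h.abs_comparisonRemainder_le hψ hA hε.1 hα hβ hne
    _ ≤ M * (12 * 10 ^ 8 * A ^ 2 * ε + 20 * A ^ 2 * (|α| * π + 2 * ε * log (1 / ε))) := by
        rw [hsplit]
        have := hk.bound_nonneg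
        gcongr
        exact integral_add_abs_sub_mul_halfPlanePoisson_le hε hα
    _ = _ := by ring

end IsNearContact

/-! ### Testing against `φ` -/

namespace InC2

variable {r ε : ℝ} {φ : ℝ → ℝ}

lemma apply_eq_zero (hφ : InC2 r ε φ) {x : ℝ} (hx : x ∉ Ioo (-r) r) : φ x = 0 :=
  image_eq_zero_of_notMem_tsupport fun h => hx (hφ.2.2.1 h)

lemma abs_le_halfPlanePoisson (hφ : InC2 r ε φ) (hε : 0 ≤ ε) (x : ℝ) :
    |φ x| ≤ halfPlanePoisson ε x := by
  by_cases hx : x ∈ Ioo (-r) r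
  · rw [halfPlanePoisson, ← sq_abs x, add_comm]
    exact (hφ.2.2.2 x hx).1
  · rw [hφ.apply_eq_zero hx, abs_zero]
    exact halfPlanePoisson_nonneg hε x

lemma abs_le_div_sq (hφ : InC2 r ε φ) (hε : 0 ≤ ε) {b x : ℝ} (hb : 0 < b) (hx : b ≤ |x|) :
    |φ x| ≤ ε / b ^ 2 := by
  refine (hφ.abs_le_halfPlanePoisson hε x).trans ?_
  rw [halfPlanePoisson, ← sq_abs x]
  gcongr
  nlinarith

lemma abs_deriv_le_div_cube (hφ : InC2 r ε φ) (hε : 0 ≤ ε) {b x : ℝ} (hb : 0 < b)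
    (hx : b ≤ |x|) : |deriv φ x| ≤ ε / b ^ 3 := by
  by_cases hxr : x ∈ Ioo (-r) r
  · refine (hφ.2.2.2 x hxr).2.trans ?_
    gcongr
    exact (pow_le_pow_left₀ hb.le hx 3).trans (le_add_of_nonneg_left (by positivity))
  · rw [Function.notMem_support.1 fun h => hxr (hφ.2.2.1 (support_deriv_subset h)), abs_zero]
    positivity

lemma sq_mul_abs_le (hφ : InC2 r ε φ) (hε : 0 < ε) (x : ℝ) : x ^ 2 * |φ x| ≤ ε := by
  calc x ^ 2 * |φ x| ≤ x ^ 2 * halfPlanePoisson ε x :=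
        mul_le_mul_of_nonneg_left (hφ.abs_le_halfPlanePoisson hε.le x) (sq_nonneg x)
    _ = ε * (x ^ 2 / (x ^ 2 + ε ^ 2)) := by rw [halfPlanePoisson]; ring
    _ ≤ ε := mul_le_of_le_one_right hε.le
        (div_le_one_of_le₀ (by linarith [sq_nonneg ε]) (by positivity))

end InC2

namespace IsC1Cutoff

variable {ψ φ : ℝ → ℝ} {ε r ρ S x : ℝ}

lemma scut_sub_one_mul_eventuallyEq_zero (hψ : IsC1Cutoff ψ) (hr : 0 < r) (φ : ℝ → ℝ)
    (hx : |x| < r / 2) : (fun y => (scut ψ r y - 1) * φ y) =ᶠ[𝓝 x] fun _ => 0 := by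
  filter_upwards [continuous_abs.continuousAt.eventually_lt_const hx] with y hy
  rw [hψ.scut_eq_one hr hy.le, sub_self, zero_mul]

lemma abs_scut_sub_one_mul_le (hψ : IsC1Cutoff ψ) (hε : 0 ≤ ε) (hr : 0 < r)
    (hφ : InC2 ρ ε φ) (x : ℝ) : |(scut ψ r x - 1) * φ x| ≤ ε / (r / 2) ^ 2 := by
  rcases lt_or_ge |x| (r / 2) with hx | hx
  · rw [(hψ.scut_sub_one_mul_eventuallyEq_zero hr φ hx).eq_of_nhds, abs_zero]
    positivity
  · rw [abs_mul, abs_sub_comm]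
    exact (mul_le_of_le_one_left (abs_nonneg _) (hψ.abs_one_sub_scut_le r x)).trans
      (hφ.abs_le_div_sq hε (by positivity) hx)

lemma abs_deriv_scut_sub_one_mul_le (hψ : IsC1Cutoff ψ) (hS : ∀ x, |deriv ψ x| ≤ S) (hε : 0 ≤ ε)
    (hr : 0 < r) (hφ : InC2 ρ ε φ) (x : ℝ) :
    |deriv (fun y => (scut ψ r y - 1) * φ y) x| ≤ S / r * (ε / (r / 2) ^ 2) + ε / (r / 2) ^ 3 := by
  have hS0 : 0 ≤ S := (abs_nonneg _).trans (hS 0)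
  rcases lt_or_ge |x| (r / 2) with hx | hx
  · rw [(hψ.scut_sub_one_mul_eventuallyEq_zero hr φ hx).deriv_eq, deriv_const, abs_zero]
    positivity
  · have hb : 0 < r / 2 := by positivity
    have hψx : HasDerivAt (scut ψ r) (deriv ψ (x / r) * (1 / r)) x :=
      (hψ.contDiff.differentiable one_ne_zero (x / r)).hasDerivAt.comp x
        ((hasDerivAt_id' x).div_const r)
    have hφx := (hφ.1.differentiable one_ne_zero x).hasDerivAt
    rw [((hψx.sub_const 1).fun_mul hφx).deriv]
    refine (abs_add_le _ _).trans (add_le_add ?_ ?_)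
    · rw [abs_mul, abs_mul, abs_of_pos (one_div_pos.2 hr), mul_one_div]
      gcongr
      exacts [hS _, hφ.abs_le_div_sq hε hb hx]
    · rw [abs_mul, abs_sub_comm]
      exact (mul_le_of_le_one_left (abs_nonneg _) (hψ.abs_one_sub_scut_le r x)).trans
        (hφ.abs_deriv_le_div_cube hε hb hx)

end IsC1Cutoff

lemma Ioo_neg_subset_Ioo_neg_two_mul {ρ : ℝ} (hρ : 0 ≤ ρ) :
    Ioo (-ρ) ρ ⊆ Ioo (-(2 * ρ)) (2 * ρ) :=
  Ioo_subset_Ioo (by linarith) (by linarith)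

lemma Icc_neg_subset_Ioo_neg_two_mul {ρ : ℝ} (hρ : 0 < ρ) :
    Icc (-ρ) ρ ⊆ Ioo (-(2 * ρ)) (2 * ρ) :=
  Icc_subset_Ioo (by linarith) (by linarith)

namespace IsNearContact

variable {A M S ε : ℝ} {f g k φ ψ : ℝ → ℝ}

lemma abs_integral_deriv_logPotential_sub_mul_cutoff_le (h : IsNearContact A ε f g)
    (hψ : IsC1Cutoff ψ) (hS : ∀ x, |deriv ψ x| ≤ S) (hA : 1 ≤ A) (hε : 0 < ε)
    (hk : IsBoundedDensity k M (2 * √ε)) (hφ : InC2 √ε ε φ) :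
    |∫ x in -√ε..√ε, (deriv (logPotential k) x - conjPoissonIntegral k (Xt ε f g x) x) *
        ((scut ψ (√ε / 2 ^ 6) x - 1) * φ x)| ≤
      4 * 128 ^ 2 * π * A * (320 * S + 641) * ε * M := by
  have hρ : 0 < √ε := sqrt_pos.2 hε
  have hρ2 : √ε ^ 2 = ε := sq_sqrt hε.le
  have hr : 0 < √ε / 2 ^ 6 := by positivity
  have hI : Icc (-√ε) √ε ⊆ Ioo (-(2 * √ε)) (2 * √ε) := Icc_neg_subset_Ioo_neg_two_mul hρ
  have hX' (x : ℝ) (hx : x ∈ Icc (-√ε) √ε) : |deriv (Xt ε f g) x| ≤ 2 * A * √ε :=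
    (h.abs_deriv_Xt_le (hI hx)).trans (by gcongr; exact abs_le.2 hx)
  have hF (x : ℝ) : |(scut ψ (√ε / 2 ^ 6) x - 1) * φ x| ≤ 128 ^ 2 :=
    (hψ.abs_scut_sub_one_mul_le hε.le hr hφ x).trans_eq (by field_simp; linarith)
  have hF' (x : ℝ) :
      |deriv (fun y => (scut ψ (√ε / 2 ^ 6) y - 1) * φ y) x| ≤ 128 ^ 2 * (64 * S + 128) / √ε :=
    (hψ.abs_deriv_scut_sub_one_mul_le hS hε.le hr hφ x).trans_eq <| by
      field_simp
      rw [hρ2]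
      ring
  refine (hk.abs_integral_deriv_logPotential_sub_mul_le (by positivity) (by linarith) hρ.le
    (by linarith) h.contDiffOn_Xt (fun x => h.Xt_pos hε)
    (fun x hx => h.gap_le hA hε (hI hx) (hI hx)) hX'
    (((hψ.contDiff_scut _).sub contDiff_const).mul hφ.1).contDiffOn
    (mul_eq_zero_of_right _ (hφ.apply_eq_zero left_notMem_Ioo))
    (mul_eq_zero_of_right _ (hφ.apply_eq_zero right_notMem_Ioo))
    (fun x _ => hF x) fun x _ => hF' x).trans_eq ?_
  field_simp
  rw [hρ2]
  ring

lemma abs_integral_deriv_logPotential_mul_slope_le (h : IsNearContact A ε f g) (hε : 0 < ε)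
    (hk : IsBoundedDensity k M (2 * √ε)) (hφ : InC2 √ε ε φ) :
    |∫ x in -√ε..√ε, deriv (logPotential k) x * (deriv f x ^ 2 / (1 + deriv f x ^ 2) * φ x)| ≤
      32 * √ε * A ^ 2 * ε * M := by
  have hρ : 0 < √ε := sqrt_pos.2 hε
  have hm (x : ℝ) (hx : x ∈ Icc (-√ε) √ε) :
      |deriv f x ^ 2 / (1 + deriv f x ^ 2) * φ x| ≤ A ^ 2 * ε :=
    calc |deriv f x ^ 2 / (1 + deriv f x ^ 2) * φ x|
        = deriv f x ^ 2 / (1 + deriv f x ^ 2) * |φ x| := by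
          rw [abs_mul, abs_of_nonneg (by positivity)]
      _ ≤ |deriv f x| ^ 2 * |φ x| := by
          rw [sq_abs]
          gcongr
          exact div_le_self (sq_nonneg _) (by linarith [sq_nonneg (deriv f x)])
      _ ≤ (A * |x|) ^ 2 * |φ x| := by
          gcongr
          exact h.left.abs_deriv_le (Icc_neg_subset_Ioo_neg_two_mul hρ hx)
      _ = A ^ 2 * (x ^ 2 * |φ x|) := by rw [mul_pow, sq_abs, mul_assoc]
      _ ≤ A ^ 2 * ε := by
          gcongr
          exact hφ.sq_mul_abs_le hε x
  refine (hk.abs_integral_deriv_logPotential_mul_le hρ.le (by linarith) (by positivity)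
    (by positivity) hm).trans_eq ?_
  ring

end IsNearContact

lemma integral_affine_abs_mul_halfPlanePoisson_le {ε a b : ℝ} (hε : ε ∈ Ioc (0 : ℝ) (1 / 10))
    (ha : 0 ≤ a) (hb : 0 ≤ b) :
    ∫ x in -√ε..√ε, (a + b * |x|) * halfPlanePoisson ε x ≤
      a * π + b * (2 * ε * log (1 / ε)) := by
  have hP := continuous_halfPlanePoisson hε.1
  have hP1 : Continuous fun x => |x| * halfPlanePoisson ε x := continuous_abs.mul hP
  have hsplit : ∫ x in -√ε..√ε, (a + b * |x|) * halfPlanePoisson ε x =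
      a * (∫ x in -√ε..√ε, halfPlanePoisson ε x) +
        b * ∫ x in -√ε..√ε, |x| * halfPlanePoisson ε x := by
    rw [← intervalIntegral.integral_const_mul, ← intervalIntegral.integral_const_mul,
      ← intervalIntegral.integral_add ((hP.const_mul a).intervalIntegrable _ _)
        ((hP1.const_mul b).intervalIntegrable _ _)]
    exact intervalIntegral.integral_congr fun x _ => by ring
  rw [hsplit]
  gcongr
  · exact intervalIntegral_halfPlanePoisson_le hε.1 (by linarith [sqrt_nonneg ε])
  · exact integral_abs_mul_halfPlanePoisson_le hε (sqrt_nonneg ε)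
      (by rw [sq_sqrt hε.1.le]; linarith [hε.1])

lemma one_le_log_one_div {ε : ℝ} (hε : ε ∈ Ioc (0 : ℝ) (1 / 10)) : 1 ≤ log (1 / ε) := by
  rw [le_log_iff_exp_le (one_div_pos.2 hε.1), le_one_div (exp_pos 1) hε.1]
  refine hε.2.trans ?_
  gcongr
  linarith [exp_one_lt_d9]

lemma integral_remainder_mul_halfPlanePoisson_le {ε : ℝ} (hε : ε ∈ Ioc (0 : ℝ) (1 / 10)) :
    ∫ α in -√ε..√ε, (12 * 10 ^ 8 * ε + 40 * (ε * log (1 / ε)) + 20 * π * |α|) *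
      halfPlanePoisson ε α ≤ 14 * 10 ^ 8 * π * (ε * log (1 / ε)) := by
  have hεl : ε ≤ ε * log (1 / ε) := le_mul_of_one_le_right hε.1.le (one_le_log_one_div hε)
  have hl : 0 ≤ ε * log (1 / ε) := hε.1.le.trans hεl
  calc _ ≤ (12 * 10 ^ 8 * ε + 40 * (ε * log (1 / ε))) * π +
        20 * π * (2 * ε * log (1 / ε)) :=
        integral_affine_abs_mul_halfPlanePoisson_le hε (by linarith [hε.1]) (by positivity)
    _ ≤ (12 * 10 ^ 8 * (ε * log (1 / ε)) + 40 * (ε * log (1 / ε))) * π +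
        20 * π * (2 * ε * log (1 / ε)) := by gcongr
    _ = (12 * 10 ^ 8 + 80) * π * (ε * log (1 / ε)) := by ring
    _ ≤ 14 * 10 ^ 8 * π * (ε * log (1 / ε)) := by gcongr; norm_num

/-! ### The weak bound -/

lemma abs_integral_le_abs_integral_add_integral {α : Type*} [MeasurableSpace α] {μ : Measure α}
    {T P u : α → ℝ} (hP : Integrable P μ) (hu : Integrable u μ)
    (hTP : ∀ᵐ x ∂μ, |T x - P x| ≤ u x) : |∫ x, T x ∂μ| ≤ |∫ x, P x ∂μ| + ∫ x, u x ∂μ := by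
  -- A nonintegrable `T` has integral `0`, so `T` need not be measurable.
  by_cases hT : Integrable T μ
  · have hsub : |∫ x, T x ∂μ - ∫ x, P x ∂μ| ≤ ∫ x, u x ∂μ := by
      rw [← integral_sub hT hP]
      exact norm_integral_le_of_norm_le (f := fun x => T x - P x) hu hTP
    linarith [abs_sub_abs_le_abs_sub (∫ x, T x ∂μ) (∫ x, P x ∂μ)]
  · rw [integral_undef hT, abs_zero]
    exact add_nonneg (abs_nonneg _)
      (integral_nonneg_of_ae (hTP.mono fun x hx => (abs_nonneg _).trans hx))

/-- The operator `H + T_{4,(g,f)} - T_{2,f}` of the comparison estimate. -/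
def comparisonOp (ψ : ℝ → ℝ) (ε : ℝ) (f g h : ℝ → ℝ) (α : ℝ) : ℝ :=
  Hop ψ ε f g h α + T4 ψ ε g f h α - T2 ψ ε f h α

lemma IsC1Cutoff.comparisonOp_congr {ψ : ℝ → ℝ} (hψ : IsC1Cutoff ψ) {ε : ℝ} (hε : 0 < ε)
    {h k : ℝ → ℝ} (hhk : EqOn h k (Ioo (-(2 * √ε)) (2 * √ε))) (f g : ℝ → ℝ) {α : ℝ}
    (hα : α ∈ Ioo (-√ε) √ε) : comparisonOp ψ ε f g h α = comparisonOp ψ ε f g k α := by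
  have hρ : 0 < √ε := sqrt_pos.2 hε
  have hscut {r : ℝ} (hr : 0 < r) (hr' : r ≤ √ε) (β : ℝ) :
      h β * scut ψ r (α - β) = k β * scut ψ r (α - β) := by
    by_cases hβ : β ∈ Ioo (-(2 * √ε)) (2 * √ε)
    · rw [hhk hβ]
    · suffices hαβ : r < |α - β| by
        rw [hψ.scut_eq_zero hr hαβ, mul_zero, mul_zero]
      have hβ' : 2 * √ε ≤ |β| := not_lt.1 (mt abs_lt.1 hβ)
      linarith [abs_sub_abs_le_abs_sub β α, abs_sub_comm α β, abs_lt.2 hα]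
  have h64 := hscut (r := √ε / 2 ^ 6) (by positivity) (by linarith)
  have h1 := hscut hρ le_rfl
  simp only [comparisonOp, Hop, T4, T2, Hker, mul_assoc, mul_comm (scut ψ _ (α - _)), h64, h1]

lemma Hop_comm (ψ : ℝ → ℝ) (ε : ℝ) (f g : ℝ → ℝ) : Hop ψ ε f g = Hop ψ ε g f := by
  unfold Hop Hker
  rw [Xt_comm]

/-- The part of `2π (H + T_{4,(g,f)} - T_{2,f}) k · φ` that carries the singular integral of `k`,
here replaced by its almost everywhere equal `deriv (logPotential k)`. -/
def comparisonPrincipal (ψ : ℝ → ℝ) (ε : ℝ) (f g k φ : ℝ → ℝ) (α : ℝ) : ℝ :=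
  (deriv (logPotential k) α - conjPoissonIntegral k (Xt ε f g α) α) *
      ((scut ψ (√ε / 2 ^ 6) α - 1) * φ α) +
    deriv (logPotential k) α * (deriv f α ^ 2 / (1 + deriv f α ^ 2) * φ α)

namespace IsNearContact

variable {A M S ε : ℝ} {f g k φ ψ : ℝ → ℝ}

lemma intervalIntegrable_deriv_logPotential_sub_mul_cutoff (h : IsNearContact A ε f g)
    (hψ : IsC1Cutoff ψ) (hε : 0 < ε) (hk : IsBoundedDensity k M (2 * √ε)) (hφ : Continuous φ) :
    IntervalIntegrable
      (fun α => (deriv (logPotential k) α - conjPoissonIntegral k (Xt ε f g α) α) *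
        ((scut ψ (√ε / 2 ^ 6) α - 1) * φ α))
      volume (-√ε) √ε := by
  have hρ : 0 < √ε := sqrt_pos.2 hε
  have hI : uIcc (-√ε) √ε ⊆ Ioo (-(2 * √ε)) (2 * √ε) := by
    rw [uIcc_of_le (by linarith)]
    exact Icc_neg_subset_Ioo_neg_two_mul hρ
  have hL : IntervalIntegrable (deriv (logPotential k)) volume (-√ε) √ε :=
    (hk.absolutelyContinuousOnInterval_logPotential (by positivity) hρ.le
      (by linarith)).intervalIntegrable_deriv
  have hQ : ContinuousOn (fun α => conjPoissonIntegral k (Xt ε f g α) α) (uIcc (-√ε) √ε) :=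
    hk.continuousOn_conjPoissonIntegral (h.contDiffOn_Xt.continuousOn.mono hI) fun α hα =>
      h.Xt_pos hε (hI hα)
  exact (hL.sub hQ.intervalIntegrable).mul_continuousOn
    (((hψ.contDiff_scut _).continuous.sub continuous_const).mul hφ).continuousOn

lemma intervalIntegrable_deriv_logPotential_mul_slope (h : IsNearContact A ε f g) (hε : 0 < ε)
    (hk : IsBoundedDensity k M (2 * √ε)) (hφ : Continuous φ) :
    IntervalIntegrable
      (fun α => deriv (logPotential k) α * (deriv f α ^ 2 / (1 + deriv f α ^ 2) * φ α))
      volume (-√ε) √ε := by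
  have hρ : 0 < √ε := sqrt_pos.2 hε
  have hL : IntervalIntegrable (deriv (logPotential k)) volume (-√ε) √ε :=
    (hk.absolutelyContinuousOnInterval_logPotential (by positivity) hρ.le
      (by linarith)).intervalIntegrable_deriv
  have hf : ContinuousOn (deriv f) (uIcc (-√ε) √ε) := by
    rw [uIcc_of_le (by linarith)]
    exact (h.left.contDiffOn.continuousOn_deriv_of_isOpen isOpen_Ioo le_rfl).mono
      (Icc_neg_subset_Ioo_neg_two_mul hρ)
  exact hL.mul_continuousOn (((hf.pow 2).div (continuousOn_const.add (hf.pow 2))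
    fun α _ => (by positivity : 1 + deriv f α ^ 2 ≠ 0)).mul hφ.continuousOn)

lemma intervalIntegrable_comparisonPrincipal (h : IsNearContact A ε f g) (hψ : IsC1Cutoff ψ)
    (hε : 0 < ε) (hk : IsBoundedDensity k M (2 * √ε)) (hφ : Continuous φ) :
    IntervalIntegrable (comparisonPrincipal ψ ε f g k φ) volume (-√ε) √ε :=
  (h.intervalIntegrable_deriv_logPotential_sub_mul_cutoff hψ hε hk hφ).add
    (h.intervalIntegrable_deriv_logPotential_mul_slope hε hk hφ)

lemma abs_integral_comparisonPrincipal_le (h : IsNearContact A ε f g) (hψ : IsC1Cutoff ψ)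
    (hS : ∀ x, |deriv ψ x| ≤ S) (hA : 1 ≤ A) (hε : 0 < ε) (hk : IsBoundedDensity k M (2 * √ε))
    (hφ : InC2 √ε ε φ) :
    |∫ α in -√ε..√ε, comparisonPrincipal ψ ε f g k φ α| ≤
      (4 * 128 ^ 2 * π * A * (320 * S + 641) + 32 * √ε * A ^ 2) * ε * M := by
  have hcont := hφ.1.continuous
  unfold comparisonPrincipal
  rw [intervalIntegral.integral_add
    (h.intervalIntegrable_deriv_logPotential_sub_mul_cutoff hψ hε hk hcont)
    (h.intervalIntegrable_deriv_logPotential_mul_slope hε hk hcont)]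
  calc _ ≤ _ + _ := abs_add_le _ _
    _ ≤ 4 * 128 ^ 2 * π * A * (320 * S + 641) * ε * M + 32 * √ε * A ^ 2 * ε * M :=
        add_le_add (h.abs_integral_deriv_logPotential_sub_mul_cutoff_le hψ hS hA hε hk hφ)
          (h.abs_integral_deriv_logPotential_mul_slope_le hε hk hφ)
    _ = _ := by ring

lemma ae_abs_comparisonOp_mul_sub_le (h : IsNearContact A ε f g) (hψ : IsC1Cutoff ψ)
    (hA : 1 ≤ A) (hε : ε ∈ Ioc 0 (1 / 10)) (hk : IsBoundedDensity k M (2 * √ε))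
    (hφ : InC2 √ε ε φ) :
    ∀ᵐ α ∂volume.restrict (Ioo (-√ε) √ε),
      |2 * π * (comparisonOp ψ ε f g k α * φ α) - comparisonPrincipal ψ ε f g k φ α| ≤
        M * A ^ 2 * ((12 * 10 ^ 8 * ε + 40 * (ε * log (1 / ε)) + 20 * π * |α|) *
          halfPlanePoisson ε α) := by
  have hρ : 0 < √ε := sqrt_pos.2 hε.1
  filter_upwards [ae_restrict_of_ae (hk.ae_tendsto_integral_truncated_inv (by positivity)),
    ae_restrict_mem measurableSet_Ioo] with α hlim hα
  have hG := hlim (Ioo_neg_subset_Ioo_neg_two_mul hρ.le hα)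
  have hsplit : 2 * π * (comparisonOp ψ ε f g k α * φ α) - comparisonPrincipal ψ ε f g k φ α =
      (∫ β, k β * comparisonRemainder ψ ε f g α β) * φ α := by
    rw [comparisonOp, h.Hop_add_T4_sub_T2_eq hψ (by linarith) hε.1 hk hα hG, comparisonPrincipal]
    field_simp
    ring
  have hR := h.abs_integral_comparisonRemainder_le hψ hA hε hk hα
  rw [hsplit, abs_mul]
  calc _ ≤ M * A ^ 2 * (12 * 10 ^ 8 * ε + 20 * π * |α| + 40 * (ε * log (1 / ε))) *
        halfPlanePoisson ε α :=
        mul_le_mul hR (hφ.abs_le_halfPlanePoisson hε.1.le α) (abs_nonneg _)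
          ((abs_nonneg _).trans hR)
    _ = _ := by ring

lemma abs_integral_comparisonOp_mul_le_of_density (h : IsNearContact A ε f g)
    (hψ : IsC1Cutoff ψ) (hS : ∀ x, |deriv ψ x| ≤ S) (hA : 1 ≤ A) (hε : ε ∈ Ioc 0 (1 / 10))
    (hk : IsBoundedDensity k M (2 * √ε)) (hφ : InC2 √ε ε φ) :
    |∫ α in Ioo (-√ε) √ε, comparisonOp ψ ε f g k α * φ α| ≤
      (4 * 128 ^ 2 * π * A * (320 * S + 641) + 32 * A ^ 2 + 14 * 10 ^ 8 * π * A ^ 2) * ε *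
        log (1 / ε) * M := by
  have hρ : 0 < √ε := sqrt_pos.2 hε.1
  have hρ1 : √ε ≤ 1 := sqrt_le_one.2 (by linarith [hε.2])
  have hlog := one_le_log_one_div hε
  have hIoo (F : ℝ → ℝ) : ∫ α in -√ε..√ε, F α = ∫ α in Ioo (-√ε) √ε, F α := by
    rw [intervalIntegral.integral_of_le (by linarith), integral_Ioc_eq_integral_Ioo]
  have hP_int := (intervalIntegrable_iff_integrableOn_Ioo_of_le (by linarith)).1
    (h.intervalIntegrable_comparisonPrincipal hψ hε.1 hk hφ.1.continuous)
  have hu_cont : Continuous fun α => M * A ^ 2 * ((12 * 10 ^ 8 * ε + 40 * (ε * log (1 / ε)) +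
      20 * π * |α|) * halfPlanePoisson ε α) := by
    have := continuous_halfPlanePoisson hε.1
    fun_prop
  have hsplit := abs_integral_le_abs_integral_add_integral hP_int
    (hu_cont.integrableOn_Icc.mono_set Ioo_subset_Icc_self)
    (h.ae_abs_comparisonOp_mul_sub_le hψ hA hε hk hφ)
  rw [integral_const_mul, integral_const_mul] at hsplit
  have hprincipal := h.abs_integral_comparisonPrincipal_le hψ hS hA hε.1 hk hφ
  have hremainder := integral_remainder_mul_halfPlanePoisson_le hε
  rw [hIoo] at hprincipal hremainder
  have hM := hk.bound_nonneg
  have hS0 : 0 ≤ S := (abs_nonneg _).trans (hS 0)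
  calc |∫ α in Ioo (-√ε) √ε, comparisonOp ψ ε f g k α * φ α|
      ≤ |2 * π * ∫ α in Ioo (-√ε) √ε, comparisonOp ψ ε f g k α * φ α| := by
        rw [abs_mul, abs_of_pos two_pi_pos]
        exact le_mul_of_one_le_left (abs_nonneg _) (by linarith [pi_gt_three])
    _ ≤ (4 * 128 ^ 2 * π * A * (320 * S + 641) + 32 * √ε * A ^ 2) * ε * M +
        M * A ^ 2 * (14 * 10 ^ 8 * π * (ε * log (1 / ε))) := hsplit.trans (by gcongr)
    _ ≤ (4 * 128 ^ 2 * π * A * (320 * S + 641) + 32 * 1 * A ^ 2) * (ε * log (1 / ε)) * M +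
        M * A ^ 2 * (14 * 10 ^ 8 * π * (ε * log (1 / ε))) := by
        gcongr
        exacts [hε.1.le, le_mul_of_one_le_right hε.1.le hlog]
    _ = _ := by ring

end IsNearContact

lemma isBoundedDensity_indicator {h : ℝ → ℝ} {M a : ℝ} (hh : Measurable h) (hM : 0 ≤ M)
    (hle : ∀ x ∈ Ioo (-a) a, |h x| ≤ M) : IsBoundedDensity (indicator (Ioo (-a) a) h) M a where
  measurable := hh.indicator measurableSet_Ioo
  abs_le x := by
    by_cases hx : x ∈ Ioo (-a) a
    · rw [indicator_of_mem hx]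
      exact hle x hx
    · rwa [indicator_of_notMem hx, abs_zero]
  eq_zero_of_notMem _ hx := indicator_of_notMem hx h

lemma IsNearContact.abs_integral_comparisonOp_mul_le {A M S ε : ℝ} {f g h φ ψ : ℝ → ℝ}
    (hfg : IsNearContact A ε f g) (hψ : IsC1Cutoff ψ) (hS : ∀ x, |deriv ψ x| ≤ S) (hA : 1 ≤ A)
    (hε : ε ∈ Ioc 0 (1 / 10)) (hh : Measurable h)
    (hM : ∀ x ∈ Ioo (-(2 * √ε)) (2 * √ε), |h x| ≤ M) (hφ : InC2 √ε ε φ) :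
    |∫ α in Ioo (-√ε) √ε, comparisonOp ψ ε f g h α * φ α| ≤
      (4 * 128 ^ 2 * π * A * (320 * S + 641) + 32 * A ^ 2 + 14 * 10 ^ 8 * π * A ^ 2) * ε *
        log (1 / ε) * M := by
  have hρ : 0 < √ε := sqrt_pos.2 hε.1
  have hM0 : 0 ≤ M := (abs_nonneg _).trans (hM 0 ⟨by linarith, by linarith⟩)
  rw [setIntegral_congr_fun measurableSet_Ioo fun α hα => congrArg (· * φ α)
    (hψ.comparisonOp_congr hε.1 (eqOn_indicator (f := h)).symm f g hα)]
  exact hfg.abs_integral_comparisonOp_mul_le_of_density hψ hS hA hε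
    (isBoundedDensity_indicator hh hM0 hM) hφ

theorem H_T4_T2_weak_bound_general {A : ℝ} (hA : 1 ≤ A) {ψ : ℝ → ℝ} (hψ : IsC1Cutoff ψ) :
    ∃ C : ℝ, 0 < C ∧ ∀ ε ∈ Ioc (0 : ℝ) (1 / 10), ∀ f g : ℝ → ℝ, IsNearContact A ε f g →
      ∀ h : ℝ → ℝ, Measurable h → ∀ M : ℝ, (∀ x ∈ Ioo (-(2 * √ε)) (2 * √ε), |h x| ≤ M) →
        ∀ φ : ℝ → ℝ, InC2 √ε ε φ →
          |∫ α in Ioo (-√ε) √ε, (Hop ψ ε f g h α + T4 ψ ε g f h α - T2 ψ ε f h α) * φ α| +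
            |∫ α in Ioo (-√ε) √ε, (Hop ψ ε f g h α + T4 ψ ε f g h α - T2 ψ ε g h α) * φ α| ≤
          C * ε * log (1 / ε) * M := by
  obtain ⟨S, hS0, hS⟩ := hψ.exists_abs_deriv_le
  refine ⟨2 * (4 * 128 ^ 2 * π * A * (320 * S + 641) + 32 * A ^ 2 + 14 * 10 ^ 8 * π * A ^ 2),
    by positivity, fun ε hε f g hfg h hh M hM φ hφ => ?_⟩
  have hleft := hfg.abs_integral_comparisonOp_mul_le hψ hS hA hε hh hM hφ
  have hright := hfg.symm.abs_integral_comparisonOp_mul_le hψ hS hA hε hh hM hφ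
  simp only [comparisonOp] at hleft hright
  rw [Hop_comm] at hright
  linarith

lemma isFlatProfile_of_abs_iteratedDerivWithin_le {A r δ : ℝ} {f : ℝ → ℝ} (hr : r ≤ δ)
    (hδ : 0 < δ) (hf : ContDiffOn ℝ 2 f (Ioo (-δ) δ)) (hf0 : f 0 = 0)
    (hf'0 : derivWithin f (Ioo (-δ) δ) 0 = 0)
    (hf2 : ∀ x ∈ Ioo (-δ) δ, |iteratedDerivWithin 2 f (Ioo (-δ) δ) x| ≤ A) :
    IsFlatProfile A r f := by
  have hsub : Ioo (-r) r ⊆ Ioo (-δ) δ := Ioo_subset_Ioo (neg_le_neg hr) hr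
  have hf' : DifferentiableOn ℝ (deriv f) (Ioo (-δ) δ) :=
    (hf.deriv_of_isOpen isOpen_Ioo (m := 1) (by norm_num)).differentiableOn one_ne_zero
  have hbound (x : ℝ) (hx : x ∈ Ioo (-r) r) : ‖deriv (deriv f) x‖ ≤ A := by
    have := hf2 x (hsub hx)
    rwa [iteratedDerivWithin_of_isOpen isOpen_Ioo (hsub hx), iteratedDeriv_succ,
      iteratedDeriv_one] at this
  refine ⟨(hf.of_le one_le_two).mono hsub, fun x hx y hy => ?_, hf0, ?_⟩
  · exact (convex_Ioo _ _).norm_image_sub_le_of_norm_deriv_le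
      (fun z hz => hf'.differentiableAt (isOpen_Ioo.mem_nhds (hsub hz))) hbound hy hx
  · rwa [← derivWithin_of_isOpen isOpen_Ioo ⟨neg_lt_zero.2 hδ, hδ⟩]

lemma GoodFG.isNearContact {δ A ε : ℝ} {f g : ℝ → ℝ} (h : GoodFG δ A ε f g) (hδ : 0 < δ)
    (hε : 2 * √ε ≤ δ) : IsNearContact A ε f g := by
  obtain ⟨hf, hg, hf0, hg0, hf'0, hg'0, hle, hneg⟩ := h
  have h25 : (2 : WithTop ℕ∞) ≤ 5 := by norm_num
  have hsub : Ioo (-(2 * √ε)) (2 * √ε) ⊆ Ioo (-(4 * √ε)) (4 * √ε) :=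
    Ioo_subset_Ioo (by linarith [sqrt_nonneg ε]) (by linarith [sqrt_nonneg ε])
  refine ⟨isFlatProfile_of_abs_iteratedDerivWithin_le hε hδ (hf.of_le h25) hf0 hf'0
    fun x hx => ?_, isFlatProfile_of_abs_iteratedDerivWithin_le hε hδ (hg.of_le h25) hg0 hg'0
    fun x hx => ?_, fun α hα β hβ => hneg α (hsub hα) β (hsub hβ)⟩
  · exact (le_add_of_nonneg_right (abs_nonneg _)).trans (hle x hx 2 (by norm_num))
  · exact (le_add_of_nonneg_left (abs_nonneg _)).trans (hle x hx 2 (by norm_num))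

lemma InC2.mono_radius {δ r ε : ℝ} {φ : ℝ → ℝ} (hφ : InC2 δ ε φ) (hr : r ≤ δ)
    (hsupp : tsupport φ ⊆ Ioo (-r) r) : InC2 r ε φ :=
  ⟨hφ.1, hφ.2.1, hsupp, fun x hx => hφ.2.2.2 x (Ioo_subset_Ioo (neg_le_neg hr) hr hx)⟩

/-- **Weak comparison of `H` with `T₄ − T₂` (Lemma 3.3(ii), estimate (3.22)).**  For every
`h ∈ L∞(I_δ)` and every `φ ∈ C₂` supported in `I_{√ε}`,
`|∫_{I_{√ε}} (H + T_{4,(g,f)} − T_{2,f})h · φ| + |∫_{I_{√ε}} (H + T_{4,(f,g)} − T_{2,g})h · φ|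
 ≲ ε log(1/ε) ‖h‖_{L∞(I_{2√ε})}`, with the constant depending only on `A`, `δ` (and `ψ`). -/
theorem H_T4_T2_weak_bound (δ A : ℝ) (hδ : δ ∈ Ioc (0:ℝ) (1/100)) (hA : 1 ≤ A)
    (ψ : ℝ → ℝ) (hψ : IsCutoff ψ) :
    ∃ C : ℝ, 0 < C ∧
      ∀ ε : ℝ, ε ∈ Ioc (0:ℝ) (δ ^ 2 / 100) →
      ∀ f g : ℝ → ℝ, GoodFG δ A ε f g →
      ∀ h : ℝ → ℝ, Measurable h → (∃ M' : ℝ, ∀ x ∈ Ioo (-δ) δ, |h x| ≤ M') →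
        ∀ M : ℝ, (∀ x ∈ Ioo (-(2 * Real.sqrt ε)) (2 * Real.sqrt ε), |h x| ≤ M) →
          ∀ φ : ℝ → ℝ, InC2 δ ε φ →
            tsupport φ ⊆ Ioo (-(Real.sqrt ε)) (Real.sqrt ε) →
            |∫ α in Ioo (-(Real.sqrt ε)) (Real.sqrt ε),
                (Hop ψ ε f g h α + T4 ψ ε g f h α - T2 ψ ε f h α) * φ α| +
              |∫ α in Ioo (-(Real.sqrt ε)) (Real.sqrt ε),
                (Hop ψ ε f g h α + T4 ψ ε f g h α - T2 ψ ε g h α) * φ α| ≤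
              C * ε * Real.log (1 / ε) * M := by
  obtain ⟨C, hC, hbound⟩ := H_T4_T2_weak_bound_general hA hψ.isC1Cutoff
  refine ⟨C, hC, fun ε hε f g hfg h hh _ M hM φ hφ hsupp => ?_⟩
  have hε' : ε ∈ Ioc (0 : ℝ) (1 / 10) := ⟨hε.1, by nlinarith [hε.2, hδ.1, hδ.2]⟩
  have hρ : 2 * √ε ≤ δ := by
    have : √ε ≤ δ / 10 := (sqrt_le_left (by linarith [hδ.1])).2 (by linarith [hε.2])
    linarith [hδ.1]
  exact hbound ε hε' f g (hfg.isNearContact hδ.1 hρ) h hh M hM φ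
    (hφ.mono_radius (by linarith [sqrt_nonneg ε]) hsupp)
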